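/- Let 𝓗 ⊂ SL(2,ℝ)² be the set of pairs that are uniformly hyperbolic with respect to the full shift on two symbols. Then: (a) every compact subset of SL(2,ℝ)² intersects only finitely many connected components of 𝓗; (b) any two distinct connected components of 𝓗 have disjoint closures, so the boundary of 𝓗 is the disjoint union of the boundaries of its connected components. -/

import Mathlib

/-!
The hyperbolicity locus is written as an explicit locally finite union of connected open sets with
pairwise disjoint closures (`piece`, `UHpairs_eq`); the theorem is then a topological fact
(`family_conclusion`). Write `x, y, z` for the traces of `A`, `B`, `AB` and
`κ = x² + y² + z² - xyz - 2` for the trace of the commutator.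

The *straight* pieces are the four sign changes of the set `Pp` of simultaneous conjugates of pairs
of positive matrices. The *twisted* pieces are the preimages, under words in `F₊` and `F₋`, of the
sets `|x|, |y|, |z| > 2`, `xyz < 0` with prescribed signs of the traces and prescribed orientation
(`Qp`). Normal forms under conjugation show that `Pp` and `Qp` are connected.

The pieces are contained in the locus. Positive pairs are uniformly hyperbolic, and so are their
conjugates. A pair with `xyz < 0` generates, up to signs, the even part of a group generated by
three reflections in disjoint lines of the hyperbolic plane, and playing ping-pong with the three
reflections shows exponential growth over all reduced words of the free group (`Refl3.groupHyp`,
`groupHyp_of_neg`). This growth does not depend on the choice of free generators, so it passes from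
`F±(A,B)` to `(A,B)`.

The pieces exhaust the locus. Uniform hyperbolicity bounds the absolute traces of all products away
from `2` by a gap that is inherited by `F₊(A,B)` and `F₋(A,B)` (`UHc.trace_gap`, `UHc.subst`). A pair
outside the straight pieces satisfies `κ ≥ 2` and `2xyz < x²y²`. If `xyz > 0`, one of the two children
under `F₊`, `F₋` satisfies these inequalities again (`kap_lt_of_no_child`), since `κ` is invariant,
and the height `|x| + |y|` drops by an amount bounded below by the gap. So after finitely many steps
`xyz < 0` (`exists_word`).

The closures are separated and the family is locally finite. The closure of a twisted piece
satisfies `κ ≥ 18`, `|x|, |y| ≥ 2` and `2xyz < x²y²` (`Tw`), which is incompatible with the closure of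
a straight piece. At most one child satisfies these conditions, and none does if `xyz < 0`, so the
word and the signs are determined by the pair (`word_unique`). Each letter of the word lowers the
height by at least `4`, so on a set of bounded height only finitely many words occur.
-/

open Matrix

noncomputable section

/-- `SL(2,ℝ)`. -/
abbrev SL2 := Matrix.SpecialLinearGroup (Fin 2) ℝ

/-- Operator norm of a `2 × 2` real matrix, induced by the Euclidean norm on `ℝ²`. -/
noncomputable def opNorm (A : Matrix (Fin 2) (Fin 2) ℝ) : ℝ :=
  ‖Matrix.toEuclideanCLM (𝕜 := ℝ) A‖

/-- Trace of an element of `SL(2,ℝ)`. -/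
def trace2 (A : SL2) : ℝ := Matrix.trace (A : Matrix (Fin 2) (Fin 2) ℝ)

/-- Topology on `SL(2,ℝ)` induced from the space of `2 × 2` real matrices. -/
instance : TopologicalSpace SL2 := instTopologicalSpaceSubtype

/-- The real projective line: quotient of `ℝ² ∖ {0}` by nonzero scalar multiplication. -/
abbrev P1 := Projectivization ℝ (Fin 2 → ℝ)

/-- The quotient topology on the real projective line. -/
instance : TopologicalSpace P1 := instTopologicalSpaceQuotient

/-- The projective action of `SL(2,ℝ)` on the real projective line. -/
def projAct (A : SL2) : P1 → P1 :=
  Projectivization.map (Matrix.SpecialLinearGroup.toLin' A).toLinearMap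
    (Matrix.SpecialLinearGroup.toLin' A).injective

/-- For a word `w = [i₁, …, iₙ]`, the product `A_{iₙ} ⋯ A_{i₁}`. -/
def wordProd {N : ℕ} (A : Fin N → SL2) (w : List (Fin N)) : SL2 :=
  (w.reverse.map A).prod

/-- Uniform hyperbolicity with respect to the full shift on `N` symbols:
every product of `n` matrices has operator norm at least `C·λⁿ`. -/
def UnifHyp {N : ℕ} (A : Fin N → SL2) : Prop :=
  ∃ C > (0:ℝ), ∃ lam > (1:ℝ), ∀ w : List (Fin N), w ≠ [] →
    opNorm (wordProd A w : Matrix (Fin 2) (Fin 2) ℝ) ≥ C * lam ^ w.length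

/-- Transitivity of the subshift of finite type given by the transition relation `T`:
any symbol can be joined to any other by an admissible word. -/
def TransitiveSubshift {N : ℕ} (T : Fin N → Fin N → Prop) : Prop :=
  ∀ α β : Fin N, ∃ w : List (Fin N), w ≠ [] ∧ w.Chain' T ∧
    w.head? = some α ∧ w.getLast? = some β

/-- Uniform hyperbolicity with respect to the subshift determined by the
transition relation `T`. -/
def UnifHypSub {N : ℕ} (T : Fin N → Fin N → Prop) (A : Fin N → SL2) : Prop :=
  ∃ C > (0:ℝ), ∃ lam > (1:ℝ), ∀ w : List (Fin N), w ≠ [] → w.Chain' T →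
    opNorm (wordProd A w : Matrix (Fin 2) (Fin 2) ℝ) ≥ C * lam ^ w.length

/-- For a word `w` in two letters (`true ↦ A`, `false ↦ B`), the corresponding
product of the matrices `A`, `B` (letters applied right-to-left). -/
def pairProd (A B : SL2) (w : List Bool) : SL2 :=
  (w.reverse.map fun b => if b then A else B).prod

/-- Uniform hyperbolicity of a pair `(A,B)` with respect to the full shift on two symbols. -/
def UnifHypPair (A B : SL2) : Prop :=
  ∃ C > (0:ℝ), ∃ lam > (1:ℝ), ∀ w : List Bool, w ≠ [] →
    opNorm (pairProd A B w : Matrix (Fin 2) (Fin 2) ℝ) ≥ C * lam ^ w.length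

/-- The hyperbolicity locus for the full shift on two symbols. -/
def UHpairs : Set (SL2 × SL2) := {p | UnifHypPair p.1 p.2}

/-- The set of pairs having an elliptic product. -/
def Epairs : Set (SL2 × SL2) :=
  {p | ∃ w : List Bool, w ≠ [] ∧ |trace2 (pairProd p.1 p.2 w)| < 2}

/-- An open interval in the projective line: a nonempty open connected subset
whose complement contains more than one point. -/
def IsOpenInterval (I : Set P1) : Prop :=
  IsOpen I ∧ IsConnected I ∧ Iᶜ.Nontrivial

/-- `H₀`: pairs possessing a common strictly invariant open interval. -/
def H0 : Set (SL2 × SL2) :=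
  {p | ∃ I : Set P1, IsOpenInterval I ∧
        projAct p.1 '' closure I ⊆ I ∧ projAct p.2 '' closure I ⊆ I}

/-- `H_id`: pairs with `|tr A| > 2`, `|tr B| > 2`, `|tr AB| > 2`, `tr A · tr B · tr AB < 0`. -/
def Hid : Set (SL2 × SL2) :=
  {p | 2 < |trace2 p.1| ∧ 2 < |trace2 p.2| ∧ 2 < |trace2 (p.1 * p.2)| ∧
       trace2 p.1 * trace2 p.2 * trace2 (p.1 * p.2) < 0}

/-- `F₊(A,B) = (A, AB)`. -/
def Fplus (p : SL2 × SL2) : SL2 × SL2 := (p.1, p.1 * p.2)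

/-- `F₋(A,B) = (BA, B)`. -/
def Fminus (p : SL2 × SL2) : SL2 × SL2 := (p.2 * p.1, p.2)

/-- `applySeq [ε₁, …, ε_k] = F_{ε_k} ∘ ⋯ ∘ F_{ε₁}`, where `true` stands for `+`
and `false` for `−`. -/
def applySeq (s : List Bool) (p : SL2 × SL2) : SL2 × SL2 :=
  s.foldl (fun q e => if e then Fplus q else Fminus q) p

/-- A pair `(A,B)` is free if `|tr A| ≥ 2`, `|tr B| ≥ 2`, `|tr AB| ≥ 2` and
`tr A · tr B · tr AB < 0`. -/
def FreePair (p : SL2 × SL2) : Prop :=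
  2 ≤ |trace2 p.1| ∧ 2 ≤ |trace2 p.2| ∧ 2 ≤ |trace2 (p.1 * p.2)| ∧
    trace2 p.1 * trace2 p.2 * trace2 (p.1 * p.2) < 0

/-- A pair is straight if it lies in the closure of `H₀`. -/
def Straight (p : SL2 × SL2) : Prop := p ∈ closure H0

/-- A pair `(A,B)` is twisted if `|tr A| ≥ 2`, `|tr B| ≥ 2` and it is not straight. -/
def Twisted (p : SL2 × SL2) : Prop :=
  2 ≤ |trace2 p.1| ∧ 2 ≤ |trace2 p.2| ∧ ¬ Straight p

/-- A pair is almost hyperbolic if every image of it under the monoid generated by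
`F₊`, `F₋` consists of two non-elliptic matrices. -/
def AlmostHyperbolic (p : SL2 × SL2) : Prop :=
  ∀ s : List Bool, 2 ≤ |trace2 (applySeq s p).1| ∧ 2 ≤ |trace2 (applySeq s p).2|

/-- Group-hyperbolicity of a pair: exponential growth over all reduced words
in the free group on two generators (`true ↦ A`, `false ↦ B`). -/
def GroupHyp (A B : SL2) : Prop :=
  ∃ C > (0:ℝ), ∃ τ > (0:ℝ), ∀ g : FreeGroup Bool, g ≠ 1 →
    opNorm ((FreeGroup.lift (fun b => if b then A else B) g : SL2) :
        Matrix (Fin 2) (Fin 2) ℝ) ≥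
      C * Real.exp (τ * (FreeGroup.toWord g).length)

/-- `M` has finitely many connected components, and distinct components have
disjoint closures. -/
def FinCompDisjClosures (M : Set P1) : Prop :=
  {C : Set P1 | ∃ x ∈ M, C = connectedComponentIn M x}.Finite ∧
    ∀ x ∈ M, ∀ y ∈ M, connectedComponentIn M x ≠ connectedComponentIn M y →
      closure (connectedComponentIn M x) ∩ closure (connectedComponentIn M y) = ∅

end

/-! ### A topological criterion -/

/-- If a set is the union of preconnected open sets with pairwise disjoint closures, then its connected
components are the nonempty members of the family. -/
theorem components_of_family {X ι : Type*} [TopologicalSpace X] (S : ι → Set X)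
    (hopen : ∀ i, IsOpen (S i)) (hconn : ∀ i, IsPreconnected (S i))
    (hdisj : ∀ i j, i ≠ j → Disjoint (closure (S i)) (closure (S j)))
    {i : ι} {p : X} (hp : p ∈ S i) : connectedComponentIn (⋃ j, S j) p = S i := by
  apply Set.Subset.antisymm
  · refine IsPreconnected.subset_left_of_subset_union (v := ⋃ j ∈ {j | j ≠ i}, S j) (hopen i)
      (isOpen_biUnion fun j _ => hopen j) ?_ ?_ ⟨p, mem_connectedComponentIn
        (Set.mem_iUnion.2 ⟨i, hp⟩), hp⟩ isPreconnected_connectedComponentIn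
    · refine Set.disjoint_iUnion₂_right.2 fun j hj => ?_
      exact (hdisj i j (Ne.symm hj)).mono subset_closure subset_closure
    · refine (connectedComponentIn_subset _ _).trans ?_
      intro x hx
      obtain ⟨j, hj⟩ := Set.mem_iUnion.1 hx
      by_cases h : j = i
      · exact Or.inl (h ▸ hj)
      · exact Or.inr (Set.mem_iUnion₂.2 ⟨j, h, hj⟩)
  · exact (hconn i).subset_connectedComponentIn hp (Set.subset_iUnion S i)

/-- For a locally finite family of preconnected open sets with pairwise disjoint closures, the three
assertions on the components of the union follow: a compact set meets finitely many members, and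
closure commutes with a locally finite union. -/
theorem family_conclusion {X ι : Type*} [TopologicalSpace X] (S : ι → Set X)
    (hopen : ∀ i, IsOpen (S i)) (hconn : ∀ i, IsPreconnected (S i))
    (hdisj : ∀ i j, i ≠ j → Disjoint (closure (S i)) (closure (S j)))
    (hlf : LocallyFinite S) (U : Set X) (hU : U = ⋃ i, S i) :
    (∀ K : Set X, IsCompact K →
      {C : Set X | (∃ p ∈ U, C = connectedComponentIn U p) ∧ (C ∩ K).Nonempty}.Finite) ∧
    (∀ p ∈ U, ∀ q ∈ U, connectedComponentIn U p ≠ connectedComponentIn U q →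
      closure (connectedComponentIn U p) ∩ closure (connectedComponentIn U q) = ∅) ∧
    frontier U = ⋃ p ∈ U, frontier (connectedComponentIn U p) := by
  subst hU
  have key : ∀ p ∈ ⋃ i, S i, ∃ i, p ∈ S i ∧ connectedComponentIn (⋃ j, S j) p = S i := by
    intro p hp
    obtain ⟨i, hi⟩ := Set.mem_iUnion.1 hp
    exact ⟨i, hi, components_of_family S hopen hconn hdisj hi⟩
  refine ⟨fun K hK => ?_, fun p hp q hq hpq => ?_, ?_⟩
  · refine ((hlf.finite_nonempty_inter_compact hK).image S).subset ?_
    rintro C ⟨⟨p, hp, rfl⟩, hC⟩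
    obtain ⟨i, -, hi⟩ := key p hp
    rw [hi] at hC ⊢
    exact ⟨i, hC, rfl⟩
  · obtain ⟨i, -, hi⟩ := key p hp
    obtain ⟨j, -, hj⟩ := key q hq
    rw [hi, hj] at hpq ⊢
    exact (hdisj i j (fun h => hpq (h ▸ rfl))).inter_eq
  · rw [(isOpen_iUnion hopen).frontier_eq, hlf.closure_iUnion]
    ext x
    simp only [Set.mem_sdiff, Set.mem_iUnion, exists_prop]
    constructor
    · rintro ⟨⟨i, hi⟩, hx⟩
      obtain ⟨p, hp⟩ := closure_nonempty_iff.1 ⟨x, hi⟩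
      refine ⟨p, ⟨i, hp⟩, ?_⟩
      rw [components_of_family S hopen hconn hdisj hp, (hopen i).frontier_eq]
      exact ⟨hi, fun h => hx ⟨i, h⟩⟩
    · rintro ⟨p, ⟨i, hp⟩, hx⟩
      rw [components_of_family S hopen hconn hdisj hp, (hopen i).frontier_eq] at hx
      refine ⟨⟨i, hx.1⟩, ?_⟩
      rintro ⟨j, hj⟩
      by_cases h : j = i
      · exact hx.2 (h ▸ hj)
      · exact Set.disjoint_left.1 (hdisj i j (Ne.symm h)) hx.1 (subset_closure hj)

/-! ### The operator norm of a product -/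

theorem opNorm_nonneg (A : Matrix (Fin 2) (Fin 2) ℝ) : 0 ≤ opNorm A := norm_nonneg _

theorem opNorm_mul (A B : Matrix (Fin 2) (Fin 2) ℝ) : opNorm (A * B) ≤ opNorm A * opNorm B := by
  unfold opNorm
  rw [map_mul]
  exact norm_mul_le _ _

theorem opNorm_neg (A : Matrix (Fin 2) (Fin 2) ℝ) : opNorm (-A) = opNorm A := by
  unfold opNorm
  rw [map_neg, norm_neg]

theorem opNorm_smul (t : ℝ) (A : Matrix (Fin 2) (Fin 2) ℝ) : opNorm (t • A) = |t| * opNorm A := by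
  unfold opNorm
  rw [map_smul, norm_smul, Real.norm_eq_abs]

theorem opNorm_one : opNorm 1 = 1 := by
  unfold opNorm
  rw [map_one, norm_one]

theorem opNorm_add (A B : Matrix (Fin 2) (Fin 2) ℝ) : opNorm (A + B) ≤ opNorm A + opNorm B := by
  unfold opNorm
  rw [map_add]
  exact norm_add_le _ _

theorem toEuclideanCLM_apply_two (A : Matrix (Fin 2) (Fin 2) ℝ) (v : EuclideanSpace ℝ (Fin 2))
    (i : Fin 2) : (Matrix.toEuclideanCLM (𝕜 := ℝ) A v) i = A i 0 * v 0 + A i 1 * v 1 := by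
  rw [Matrix.ofLp_toEuclideanCLM]
  simp [Matrix.mulVec, dotProduct, Fin.sum_univ_two]

theorem abs_entry_le_opNorm (A : Matrix (Fin 2) (Fin 2) ℝ) (i j : Fin 2) :
    |A i j| ≤ opNorm A := by
  have h := (Matrix.toEuclideanCLM (𝕜 := ℝ) A).le_opNorm (EuclideanSpace.single j 1)
  have h1 : (Matrix.toEuclideanCLM (𝕜 := ℝ) A (EuclideanSpace.single j 1)) i = A i j := by
    rw [toEuclideanCLM_apply_two]
    fin_cases j <;> simp
  have h2 := PiLp.norm_apply_le (Matrix.toEuclideanCLM (𝕜 := ℝ) A (EuclideanSpace.single j 1)) i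
  rw [h1] at h2
  simp only [PiLp.norm_single, norm_one, mul_one] at h
  exact h2.trans h

theorem abs_trace_le_opNorm (A : Matrix (Fin 2) (Fin 2) ℝ) : |A.trace| ≤ 2 * opNorm A := by
  rw [Matrix.trace_fin_two]
  have := abs_add_le (A 0 0) (A 1 1)
  have := abs_entry_le_opNorm A 0 0
  have := abs_entry_le_opNorm A 1 1
  linarith

theorem opNorm_le_of_entries (A : Matrix (Fin 2) (Fin 2) ℝ) {m : ℝ} (h : ∀ i j, |A i j| ≤ m) :
    opNorm A ≤ 4 * m := by
  have hm : 0 ≤ m := (abs_nonneg _).trans (h 0 0)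
  unfold opNorm
  refine ContinuousLinearMap.opNorm_le_bound _ (by positivity) fun v => ?_
  have key : ∀ i, |(Matrix.toEuclideanCLM (𝕜 := ℝ) A v) i| ≤ 2 * m * ‖v‖ := by
    intro i
    rw [toEuclideanCLM_apply_two]
    have e0 := PiLp.norm_apply_le v 0
    have e1 := PiLp.norm_apply_le v 1
    rw [Real.norm_eq_abs] at e0 e1
    have := abs_add_le (A i 0 * v 0) (A i 1 * v 1)
    rw [abs_mul, abs_mul] at this
    have := mul_le_mul (h i 0) e0 (abs_nonneg _) hm
    have := mul_le_mul (h i 1) e1 (abs_nonneg _) hm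
    linarith
  rw [EuclideanSpace.norm_eq]
  refine Real.sqrt_le_iff.2 ⟨by positivity, ?_⟩
  simp only [Fin.sum_univ_two, Real.norm_eq_abs]
  have k0 := pow_le_pow_left₀ (abs_nonneg _) (key 0) 2
  have k1 := pow_le_pow_left₀ (abs_nonneg _) (key 1) 2
  nlinarith [sq_nonneg (m * ‖v‖)]

/-! ### Coordinates on `SL(2,ℝ)` -/

theorem trace2_eq (A : SL2) : trace2 A = A.1 0 0 + A.1 1 1 := Matrix.trace_fin_two _

theorem det_eq (A : SL2) : A.1 0 0 * A.1 1 1 - A.1 0 1 * A.1 1 0 = 1 := by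
  rw [← Matrix.det_fin_two]
  exact A.2

theorem mul_entry (A B : SL2) (i j : Fin 2) :
    (A * B).1 i j = A.1 i 0 * B.1 0 j + A.1 i 1 * B.1 1 j := by
  rw [Matrix.SpecialLinearGroup.coe_mul, Matrix.mul_apply, Fin.sum_univ_two]

theorem opNorm_inv_le (A : SL2) :
    opNorm ((A⁻¹ : SL2) : Matrix (Fin 2) (Fin 2) ℝ) ≤ 4 * opNorm (A : Matrix (Fin 2) (Fin 2) ℝ) := by
  apply opNorm_le_of_entries
  intro i j
  rw [Matrix.SpecialLinearGroup.coe_inv, Matrix.adjugate_fin_two]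
  fin_cases i <;> fin_cases j <;> simp <;> exact abs_entry_le_opNorm _ _ _

theorem trace2_mul_comm (A B : SL2) : trace2 (A * B) = trace2 (B * A) := by
  simp only [trace2_eq, mul_entry]; ring

/-- The trace identity `tr(A·AB) = tr A · tr AB - tr B`. -/
theorem trace2_mul_mul (A B : SL2) :
    trace2 (A * (A * B)) = trace2 A * trace2 (A * B) - trace2 B := by
  simp only [trace2_eq, mul_entry]
  linear_combination (- B.1 0 0 - B.1 1 1) * det_eq A

/-- The trace identity `tr(BA·B) = tr AB · tr B - tr A`. -/
theorem trace2_mul_mul' (A B : SL2) :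
    trace2 (B * A * B) = trace2 (A * B) * trace2 B - trace2 A := by
  simp only [trace2_eq, mul_entry]
  linear_combination (- A.1 0 0 - A.1 1 1) * det_eq B

/-! ### Topology of `SL(2,ℝ)` -/

theorem continuous_entry (i j : Fin 2) : Continuous fun A : SL2 => A.1 i j :=
  (continuous_subtype_val : Continuous (Subtype.val :
    {A : Matrix (Fin 2) (Fin 2) ℝ // A.det = 1} → _)).matrix_elem i j

theorem continuous_SL2_mk {X : Type*} [TopologicalSpace X] {f : X → SL2}
    (h : ∀ i j, Continuous fun x => (f x).1 i j) : Continuous f := by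
  refine (continuous_induced_rng (f := (Subtype.val :
    {A : Matrix (Fin 2) (Fin 2) ℝ // A.det = 1} → _))).2 ?_
  exact continuous_matrix h

theorem continuous_SL2_mul {X : Type*} [TopologicalSpace X] {f g : X → SL2}
    (hf : Continuous f) (hg : Continuous g) : Continuous fun x => f x * g x := by
  refine continuous_SL2_mk fun i j => ?_
  simp only [mul_entry]
  have a := fun i j => (continuous_entry i j).comp hf
  have b := fun i j => (continuous_entry i j).comp hg
  exact ((a i 0).mul (b 0 j)).add ((a i 1).mul (b 1 j))

theorem continuous_SL2_inv {X : Type*} [TopologicalSpace X] {f : X → SL2}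
    (hf : Continuous f) : Continuous fun x => (f x)⁻¹ := by
  refine continuous_SL2_mk fun i j => ?_
  have a := fun i j => (continuous_entry i j).comp hf
  have e : ∀ x, ((f x)⁻¹).1 = !![(f x).1 1 1, -(f x).1 0 1; -(f x).1 1 0, (f x).1 0 0] :=
    fun x => by
      rw [← Matrix.adjugate_fin_two]; exact Matrix.SpecialLinearGroup.coe_inv _
  simp only [e]
  fin_cases i <;> fin_cases j <;> simp
  exacts [a 1 1, (a 0 1).neg, (a 1 0).neg, a 0 0]

theorem continuous_trace2 : Continuous trace2 := by
  have : trace2 = fun A => A.1 0 0 + A.1 1 1 := funext trace2_eq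
  rw [this]
  exact (continuous_entry 0 0).add (continuous_entry 1 1)

theorem isInducing_SL2 : Topology.IsInducing (fun A : SL2 => (A.1 : Matrix (Fin 2) (Fin 2) ℝ)) :=
  ⟨rfl⟩

/-! ### Elementary properties of uniform hyperbolicity -/

theorem pairProd_cons (A B : SL2) (b : Bool) (w : List Bool) :
    pairProd A B (b :: w) = pairProd A B w * (if b then A else B) := by
  simp [pairProd]

theorem pairProd_append (A B : SL2) (u v : List Bool) :
    pairProd A B (u ++ v) = pairProd A B v * pairProd A B u := by
  simp [pairProd]

/-- Uniform hyperbolicity with prescribed constants `C` and `l`. -/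
def UHc (C l : ℝ) (p : SL2 × SL2) : Prop :=
  ∀ w : List Bool, w ≠ [] →
    opNorm (pairProd p.1 p.2 w : Matrix (Fin 2) (Fin 2) ℝ) ≥ C * l ^ w.length

/-- Substituting positive words for the two letters keeps the constants, since words do not get
shorter. -/
theorem UHc.subst {C l : ℝ} (hC : 0 < C) (hl : 1 < l) {p q : SL2 × SL2} (s : Bool → List Bool)
    (hs : ∀ b, 1 ≤ (s b).length) (h1 : q.1 = pairProd p.1 p.2 (s true))
    (h2 : q.2 = pairProd p.1 p.2 (s false)) (h : UHc C l p) : UHc C l q := by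
  have key : ∀ w : List Bool, pairProd q.1 q.2 w = pairProd p.1 p.2 (w.flatMap s) ∧
      w.length ≤ (w.flatMap s).length := by
    intro w
    induction w with
    | nil => simp [pairProd]
    | cons b w ih =>
      have hb := hs b
      rw [pairProd_cons, List.flatMap_cons, pairProd_append, ih.1]
      refine ⟨?_, ?_⟩
      · cases b <;> simp [h1, h2]
      · have := ih.2
        simp only [List.length_append, List.length_cons]
        omega
  intro w hw
  obtain ⟨e, hlen⟩ := key w
  have hne : w.flatMap s ≠ [] := by
    intro h0
    rw [h0] at hlen
    exact hw (List.length_eq_zero_iff.1 (Nat.le_zero.1 hlen))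
  rw [e]
  refine le_trans ?_ (h _ hne)
  exact mul_le_mul_of_nonneg_left (pow_le_pow_right₀ hl.le hlen) hC.le

theorem UHc.fplus {C l : ℝ} (hC : 0 < C) (hl : 1 < l) {p : SL2 × SL2} (h : UHc C l p) :
    UHc C l (Fplus p) :=
  h.subst hC hl (fun b => if b then [true] else [false, true]) (by simp) (by simp [Fplus, pairProd])
    (by simp [Fplus, pairProd])

theorem UHc.fminus {C l : ℝ} (hC : 0 < C) (hl : 1 < l) {p : SL2 × SL2} (h : UHc C l p) :
    UHc C l (Fminus p) :=
  h.subst hC hl (fun b => if b then [true, false] else [false]) (by simp)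
    (by simp [Fminus, pairProd]) (by simp [Fminus, pairProd])

theorem pairProd_replicate (A B : SL2) (w : List Bool) (n : ℕ) :
    pairProd A B (List.replicate n w).flatten = pairProd A B w ^ n := by
  induction n with
  | zero => simp [pairProd]
  | succ n ih => rw [List.replicate_succ, List.flatten_cons, pairProd_append, ih, pow_succ]

theorem trace2_sq (M : SL2) : trace2 (M ^ 2) = trace2 M ^ 2 - 2 := by
  rw [sq]
  simp only [trace2_eq, mul_entry]
  linear_combination (-2) * det_eq M

theorem cayley_hamilton (M : SL2) :
    ((M ^ 2 : SL2) : Matrix (Fin 2) (Fin 2) ℝ) = trace2 M • (M : Matrix (Fin 2) (Fin 2) ℝ) - 1 := by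
  have hd := det_eq M
  rw [sq]
  ext i j
  rw [mul_entry, trace2_eq]
  fin_cases i <;> fin_cases j <;> simp
  · linear_combination -hd
  · ring
  · ring
  · linear_combination -hd

/-- Along the powers `M ^ 2 ^ k` the norm grows at most like `3 ^ k * m ^ 2 ^ k` when
`|tr M| ≤ m + 1 / m`. -/
theorem opNorm_pow_le (M : SL2) {m : ℝ} (hm : 1 ≤ m) (h : |trace2 M| ≤ m + 1 / m) (k : ℕ) :
    |trace2 (M ^ 2 ^ k)| ≤ m ^ 2 ^ k + 1 / m ^ 2 ^ k ∧
    opNorm (M ^ 2 ^ k : SL2) ≤ 3 ^ k * m ^ 2 ^ k * (opNorm M + 1) := by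
  have hm0 : 0 < m := by linarith
  induction k with
  | zero =>
    refine ⟨by simpa using h, ?_⟩
    simp only [pow_zero, pow_one, one_mul]
    nlinarith [opNorm_nonneg M]
  | succ k ih =>
    set N := M ^ 2 ^ k with hN
    set r := m ^ 2 ^ k with hr
    have hr1 : 1 ≤ r := one_le_pow₀ hm
    have e : M ^ 2 ^ (k + 1) = N ^ 2 := by rw [hN, ← pow_mul, pow_succ]
    have e' : m ^ 2 ^ (k + 1) = r ^ 2 := by rw [hr, ← pow_mul, pow_succ]
    rw [e, e']
    obtain ⟨h1, h2⟩ := ih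
    have hinv : 1 / r ≤ 1 := by rw [div_le_one (by linarith)]; exact hr1
    have hinv0 : 0 < 1 / r := by positivity
    refine ⟨?_, ?_⟩
    · rw [trace2_sq, abs_le]
      have : trace2 N ^ 2 ≤ (r + 1 / r) ^ 2 := sq_le_sq' (by linarith [neg_abs_le (trace2 N)])
        (by linarith [le_abs_self (trace2 N)])
      have e2 : (r + 1 / r) ^ 2 = r ^ 2 + 1 / r ^ 2 + 2 := by field_simp; ring
      have hs : 2 ≤ r ^ 2 + 1 / r ^ 2 := by
        have : (r - 1 / r) ^ 2 = r ^ 2 + 1 / r ^ 2 - 2 := by field_simp; ring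
        nlinarith [sq_nonneg (r - 1 / r)]
      constructor
      · nlinarith [sq_nonneg (trace2 N)]
      · linarith
    · rw [cayley_hamilton, sub_eq_add_neg]
      refine (opNorm_add _ _).trans ?_
      rw [opNorm_neg, opNorm_one, opNorm_smul]
      have ht : |trace2 N| ≤ 2 * r := by linarith
      have h3 : (1 : ℝ) ≤ 3 ^ k := one_le_pow₀ (by norm_num)
      have hM := opNorm_nonneg M
      have h4 : |trace2 N| * opNorm (N : Matrix (Fin 2) (Fin 2) ℝ) ≤
          2 * r * (3 ^ k * r * (opNorm M + 1)) :=
        mul_le_mul ht h2 (opNorm_nonneg _) (by linarith)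
      have h5 : (1 : ℝ) ≤ 3 ^ k * r ^ 2 * (opNorm M + 1) := by
        have : 1 ≤ r ^ 2 := one_le_pow₀ hr1
        have : (1 : ℝ) ≤ 3 ^ k * r ^ 2 := one_le_mul_of_one_le_of_one_le h3 this
        exact one_le_mul_of_one_le_of_one_le this (by linarith)
      rw [pow_succ]
      nlinarith

/-- Uniform hyperbolicity keeps the traces of all products away from `[-2, 2]`, with a gap that
depends only on the growth rate: by Cayley-Hamilton, a small trace of `M` forces the norms of the
powers `M ^ 2 ^ k` to grow too slowly. -/
theorem UHc.trace_gap {C l m : ℝ} (hC : 0 < C) (hm : 1 ≤ m) (hml : m < l) {p : SL2 × SL2}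
    (h : UHc C l p) (w : List Bool) (hw : w ≠ []) :
    m + 1 / m < |trace2 (pairProd p.1 p.2 w)| := by
  by_contra! hcon
  set M := pairProd p.1 p.2 w with hM
  have hm0 : 0 < m := by linarith
  have hl1 : 1 ≤ l := by linarith
  have hlen : 1 ≤ w.length := List.length_pos_iff.2 hw
  set nu := l / m
  have hnu : 1 < nu := (one_lt_div hm0).2 hml
  set K := (opNorm M + 1) / C
  have hK : 0 < K := div_pos (by linarith [opNorm_nonneg M]) hC
  have key : ∀ k : ℕ, nu ^ 2 ^ k ≤ (2 ^ k : ℕ) ^ 2 * K := by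
    intro k
    have h1 := (opNorm_pow_le M hm hcon k).2
    have hne : (List.replicate (2 ^ k) w).flatten ≠ [] := by
      intro h0
      have := congrArg List.length h0
      simp at this
      exact hw this
    have h2 := h _ hne
    rw [pairProd_replicate, ← hM] at h2
    have h3 : l ^ 2 ^ k ≤ l ^ (List.replicate (2 ^ k) w).flatten.length := by
      apply pow_le_pow_right₀ hl1
      simp
      exact hlen
    have h4 : C * l ^ 2 ^ k ≤ 3 ^ k * m ^ 2 ^ k * (opNorm M + 1) :=
      (mul_le_mul_of_nonneg_left h3 hC.le).trans (h2.trans h1)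
    -- the factor `3 ^ k` of `opNorm_pow_le` is only polynomial in `2 ^ k`
    have h5 : (3 : ℝ) ^ k ≤ (2 ^ k : ℕ) ^ 2 := by
      push_cast
      rw [← pow_mul, mul_comm, pow_mul]
      exact pow_le_pow_left₀ (by norm_num) (by norm_num) _
    have hmk : 0 < m ^ 2 ^ k := by positivity
    rw [div_pow, div_le_iff₀ hmk]
    have h6 : l ^ 2 ^ k ≤ 3 ^ k * m ^ 2 ^ k * K := by
      rw [← mul_div_assoc, le_div_iff₀ hC]
      linarith
    refine h6.trans ?_
    have := mul_le_mul_of_nonneg_right h5 (mul_nonneg hmk.le hK.le)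
    nlinarith
  -- `nu ^ n ≤ n ^ 2 * K` for all `n = 2 ^ k` contradicts the exponential growth of `nu ^ n`
  have hlim := (tendsto_pow_const_div_const_pow_of_one_lt 2 hnu).comp
    (tendsto_pow_atTop_atTop_of_one_lt (r := (2 : ℕ)) (by norm_num))
  have hev := hlim.eventually (gt_mem_nhds (show 0 < 1 / K by positivity))
  obtain ⟨k, hk⟩ := hev.exists
  have hpos : 0 < nu ^ 2 ^ k := by positivity
  simp only [Function.comp] at hk
  rw [div_lt_div_iff₀ hpos hK] at hk
  have := key k
  linarith

/-! ### Group-hyperbolicity -/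

theorem norm_lift_le {f : Bool → FreeGroup Bool} {k : ℕ} (hf : ∀ b, (f b).norm ≤ k)
    (g : FreeGroup Bool) : (FreeGroup.lift f g).norm ≤ k * g.norm := by
  have key : ∀ L : List (Bool × Bool),
      (FreeGroup.lift f (FreeGroup.mk L)).norm ≤ k * L.length := by
    intro L
    rw [FreeGroup.lift_mk]
    induction L with
    | nil => simp
    | cons x L ih =>
      rw [List.map_cons, List.prod_cons, List.length_cons, mul_add, mul_one, add_comm]
      refine (FreeGroup.norm_mul_le _ _).trans (add_le_add ?_ ih)
      obtain ⟨a, e⟩ := x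
      cases e
      · simpa [FreeGroup.norm_inv_eq] using hf a
      · simpa using hf a
  have := key g.toWord
  rwa [FreeGroup.mk_toWord] at this

/-- Group-hyperbolicity is invariant under change of generators: an automorphism of the free group
is a quasi-isometry of word lengths. -/
theorem GroupHyp.subst {p q : SL2 × SL2} (f f' : Bool → FreeGroup Bool)
    (hf : ∀ b, (f b).norm ≤ 2) (hff' : ∀ b, FreeGroup.lift f (f' b) = FreeGroup.of b)
    (hpq : ∀ b, FreeGroup.lift (fun b => if b then q.1 else q.2) (f' b) = if b then p.1 else p.2)
    (h : GroupHyp q.1 q.2) : GroupHyp p.1 p.2 := by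
  obtain ⟨C, hC, τ, hτ, h⟩ := h
  refine ⟨C, hC, τ / 2, by positivity, fun g hg => ?_⟩
  have e1 : FreeGroup.lift f (FreeGroup.lift f' g) = g := by
    have : (FreeGroup.lift f).comp (FreeGroup.lift f') = MonoidHom.id _ := by
      ext b; simp [hff']
    exact DFunLike.congr_fun this g
  have e2 : FreeGroup.lift (fun b => if b then q.1 else q.2) (FreeGroup.lift f' g) =
      FreeGroup.lift (fun b => if b then p.1 else p.2) g := by
    have : (FreeGroup.lift (fun b => if b then q.1 else q.2)).comp (FreeGroup.lift f') =
        FreeGroup.lift (fun b => if b then p.1 else p.2) := by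
      ext1 b; simp [hpq]
    exact DFunLike.congr_fun this g
  have hne : FreeGroup.lift f' g ≠ 1 := by
    intro h0
    rw [h0, map_one] at e1
    exact hg e1.symm
  have h1 := h _ hne
  rw [e2] at h1
  refine le_trans ?_ h1
  have hlen := norm_lift_le hf (FreeGroup.lift f' g)
  rw [e1] at hlen
  have hlen' : (g.toWord.length : ℝ) ≤ 2 * ((FreeGroup.lift f' g).toWord.length : ℝ) := by
    exact_mod_cast hlen
  refine mul_le_mul_of_nonneg_left (Real.exp_le_exp.2 ?_) hC.le
  nlinarith

theorem norm_of_mul_of_le (a b : Bool) :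
    (FreeGroup.of a * FreeGroup.of b).norm ≤ 2 := by
  refine (FreeGroup.norm_mul_le _ _).trans ?_
  simp [FreeGroup.norm_of]

theorem groupHyp_of_fplus {p : SL2 × SL2} (h : GroupHyp (Fplus p).1 (Fplus p).2) :
    GroupHyp p.1 p.2 := by
  refine GroupHyp.subst
    (fun b => if b then FreeGroup.of true else FreeGroup.of true * FreeGroup.of false)
    (fun b => if b then FreeGroup.of true else (FreeGroup.of true)⁻¹ * FreeGroup.of false)
    ?_ ?_ ?_ h
  · rintro (_ | _)
    · exact norm_of_mul_of_le _ _
    · simp [FreeGroup.norm_of]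
  · rintro (_ | _) <;> simp
  · rintro (_ | _) <;> simp [Fplus]

theorem groupHyp_of_fminus {p : SL2 × SL2} (h : GroupHyp (Fminus p).1 (Fminus p).2) :
    GroupHyp p.1 p.2 := by
  refine GroupHyp.subst
    (fun b => if b then FreeGroup.of false * FreeGroup.of true else FreeGroup.of false)
    (fun b => if b then (FreeGroup.of false)⁻¹ * FreeGroup.of true else FreeGroup.of false)
    ?_ ?_ ?_ h
  · rintro (_ | _)
    · simp [FreeGroup.norm_of]
    · exact norm_of_mul_of_le _ _
  · rintro (_ | _) <;> simp
  · rintro (_ | _) <;> simp [Fminus]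

theorem applySeq_cons (e : Bool) (s : List Bool) (p : SL2 × SL2) :
    applySeq (e :: s) p = applySeq s (if e then Fplus p else Fminus p) := rfl

theorem groupHyp_of_applySeq (s : List Bool) (p : SL2 × SL2)
    (h : GroupHyp (applySeq s p).1 (applySeq s p).2) : GroupHyp p.1 p.2 := by
  induction s generalizing p with
  | nil => exact h
  | cons e s ih =>
    rw [applySeq_cons] at h
    have := ih _ h
    cases e
    · exact groupHyp_of_fminus (by simpa using this)
    · exact groupHyp_of_fplus (by simpa using this)

theorem unifHypPair_of_groupHyp {A B : SL2} (h : GroupHyp A B) : UnifHypPair A B := by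
  obtain ⟨C, hC, τ, hτ, h⟩ := h
  refine ⟨C, hC, Real.exp τ, Real.one_lt_exp_iff.2 hτ, fun w hw => ?_⟩
  set L : List (Bool × Bool) := w.reverse.map fun b => (b, true) with hL
  have hred : FreeGroup.IsReduced L := by
    rw [FreeGroup.IsReduced, hL, List.isChain_map]
    exact List.Pairwise.isChain (List.pairwise_of_forall (by simp))
  have hword : (FreeGroup.mk L).toWord = L := by
    rw [FreeGroup.toWord_mk, hred.reduce_eq]
  have hne : FreeGroup.mk L ≠ 1 := by
    intro h0
    rw [h0, FreeGroup.toWord_one] at hword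
    rw [hL] at hword
    simp at hword
    exact hw hword
  have h1 := h _ hne
  have e : FreeGroup.lift (fun b => if b then A else B) (FreeGroup.mk L) = pairProd A B w := by
    rw [FreeGroup.lift_mk, pairProd, hL, List.map_map]
    rfl
  rw [hword, e] at h1
  have hlen : L.length = w.length := by simp [hL]
  rw [hlen, mul_comm τ, Real.exp_nat_mul] at h1
  exact h1

/-! ### Products of three reflections -/

/-- The hyperbolic reflection `X ↦ -R X R` attached to `R` with `R² = 1`. -/
def hrefl (R X : Matrix (Fin 2) (Fin 2) ℝ) : Matrix (Fin 2) (Fin 2) ℝ := -(R * X * R)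

/-- `a` is at least `m` and dominates the nonnegative numbers `b` and `c`. -/
def Dom (m a b c : ℝ) : Prop := m ≤ a ∧ 0 ≤ b ∧ b ≤ a ∧ 0 ≤ c ∧ c ≤ a

theorem Dom.swap {m a b c : ℝ} (h : Dom m a b c) : Dom m a c b :=
  ⟨h.1, h.2.2.2.1, h.2.2.2.2, h.2.1, h.2.2.1⟩

/-- A reflection replaces one coordinate; if another one was dominant, the new one becomes dominant,
with expansion by `2 l - 1`. -/
theorem Dom.step {m a b c p q l : ℝ} (hm : 0 ≤ m) (hl : 1 < l) (hp : l ≤ p) (hq : l ≤ q)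
    (h : Dom m b a c) : Dom ((2 * l - 1) * m) (-a + 2 * p * b + 2 * q * c) b c := by
  obtain ⟨h1, h2, h3, h4, h5⟩ := h
  have hb : 0 ≤ b := hm.trans h1
  have e1 : l * b ≤ p * b := mul_le_mul_of_nonneg_right hp hb
  have e2 : l * c ≤ q * c := mul_le_mul_of_nonneg_right hq h4
  have e3 : b ≤ l * b := le_mul_of_one_le_left hb hl.le
  have e4 : c ≤ l * c := le_mul_of_one_le_left h4 hl.le
  have e5 : (2 * l - 1) * m ≤ (2 * l - 1) * b := mul_le_mul_of_nonneg_left h1 (by linarith)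
  refine ⟨by linarith, hb, by linarith, h4, by linarith⟩

theorem Dom.mono {m m' a b c : ℝ} (hm : m' ≤ m) (h : Dom m a b c) : Dom m' a b c :=
  ⟨hm.trans h.1, h.2⟩

/-- Three involutions with `Rᵢ Rⱼ + Rⱼ Rᵢ = -2 cᵢⱼ` and all `cᵢⱼ ≥ l > 1`; the maps `hrefl Rᵢ` are
then the reflections in three pairwise disjoint lines of the hyperbolic plane, none of which
separates the other two. -/
structure Refl3 (R1 R2 R3 : Matrix (Fin 2) (Fin 2) ℝ) (c12 c13 c23 l : ℝ) : Prop where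
  hl : 1 < l
  h12 : l ≤ c12
  h13 : l ≤ c13
  h23 : l ≤ c23
  sq1 : R1 * R1 = 1
  sq2 : R2 * R2 = 1
  sq3 : R3 * R3 = 1
  m12 : R1 * R2 + R2 * R1 = (-2 * c12) • (1 : Matrix (Fin 2) (Fin 2) ℝ)
  m13 : R1 * R3 + R3 * R1 = (-2 * c13) • (1 : Matrix (Fin 2) (Fin 2) ℝ)
  m23 : R2 * R3 + R3 * R2 = (-2 * c23) • (1 : Matrix (Fin 2) (Fin 2) ℝ)

theorem hrefl_other {R S : Matrix (Fin 2) (Fin 2) ℝ} {c : ℝ} (hR : R * R = 1)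
    (h : R * S + S * R = (-2 * c) • (1 : Matrix (Fin 2) (Fin 2) ℝ)) :
    R * S * R = (-2 * c) • R - S := by
  have : R * S = (-2 * c) • (1 : Matrix (Fin 2) (Fin 2) ℝ) - S * R := by rw [← h]; abel
  rw [this, sub_mul, mul_assoc, hR, mul_one, smul_mul_assoc, one_mul]

theorem hrefl_hrefl {R : Matrix (Fin 2) (Fin 2) ℝ} (hR : R * R = 1) (X : Matrix (Fin 2) (Fin 2) ℝ) :
    hrefl R (hrefl R X) = X := by
  unfold hrefl
  have : R * -(R * X * R) * R = -((R * R) * X * (R * R)) := by noncomm_ring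
  rw [this, hR]; simp

theorem hrefl_comb {R S T : Matrix (Fin 2) (Fin 2) ℝ} {c d : ℝ} (hR : R * R = 1)
    (hS : R * S + S * R = (-2 * c) • (1 : Matrix (Fin 2) (Fin 2) ℝ))
    (hT : R * T + T * R = (-2 * d) • (1 : Matrix (Fin 2) (Fin 2) ℝ)) (x y z : ℝ) :
    hrefl R (x • R + y • S + z • T) = (-x + 2 * c * y + 2 * d * z) • R + y • S + z • T := by
  unfold hrefl
  rw [mul_add, mul_add, add_mul, add_mul, mul_smul_comm, mul_smul_comm, mul_smul_comm,
    smul_mul_assoc, smul_mul_assoc, smul_mul_assoc, hR, one_mul, hrefl_other hR hS,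
    hrefl_other hR hT]
  module

theorem trace_hrefl_mul {R : Matrix (Fin 2) (Fin 2) ℝ} (hR : R * R = 1)
    (X : Matrix (Fin 2) (Fin 2) ℝ) : (hrefl R X * R).trace = -(X * R).trace := by
  unfold hrefl
  rw [neg_mul, Matrix.trace_neg, mul_assoc, hR, mul_one, Matrix.trace_mul_comm]

theorem trace_mul_of_anticomm {R S : Matrix (Fin 2) (Fin 2) ℝ} {c : ℝ}
    (h : R * S + S * R = (-2 * c) • (1 : Matrix (Fin 2) (Fin 2) ℝ)) :
    (R * S).trace = -2 * c := by
  have := congrArg Matrix.trace h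
  rw [Matrix.trace_add, Matrix.trace_mul_comm S R, Matrix.trace_smul] at this
  simp at this
  linarith

/-! ### Ping-pong for three reflections -/

/-- `U` is a combination of `R1, R2, R3` with nonnegative coefficients whose dominant one, at least
`m`, is the first if `g` is `true` and the third otherwise. -/
def DomV (R1 R2 R3 : Matrix (Fin 2) (Fin 2) ℝ) (g : Bool) (m : ℝ)
    (U : Matrix (Fin 2) (Fin 2) ℝ) : Prop :=
  ∃ x y z, U = x • R1 + y • R2 + z • R3 ∧ if g then Dom m x y z else Dom m z x y

/-- The reflection attached to the letter `g`. -/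
def side (R1 R3 : Matrix (Fin 2) (Fin 2) ℝ) (g : Bool) : Matrix (Fin 2) (Fin 2) ℝ :=
  if g then R1 else R3

section
variable {R1 R2 R3 : Matrix (Fin 2) (Fin 2) ℝ} {c12 c13 c23 l : ℝ}

theorem Refl3.s1 (h : Refl3 R1 R2 R3 c12 c13 c23 l) (x y z : ℝ) :
    hrefl R1 (x • R1 + y • R2 + z • R3) =
      (-x + 2 * c12 * y + 2 * c13 * z) • R1 + y • R2 + z • R3 :=
  hrefl_comb h.sq1 h.m12 h.m13 x y z

theorem Refl3.s2 (h : Refl3 R1 R2 R3 c12 c13 c23 l) (x y z : ℝ) :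
    hrefl R2 (x • R1 + y • R2 + z • R3) =
      x • R1 + (-y + 2 * c12 * x + 2 * c23 * z) • R2 + z • R3 := by
  have := hrefl_comb h.sq2 (by rw [add_comm]; exact h.m12) h.m23 y x z
  rw [add_comm (y • R2), add_comm ((-y + 2 * c12 * x + 2 * c23 * z) • R2)] at this
  exact this

theorem Refl3.s3 (h : Refl3 R1 R2 R3 c12 c13 c23 l) (x y z : ℝ) :
    hrefl R3 (x • R1 + y • R2 + z • R3) =
      x • R1 + y • R2 + (-z + 2 * c13 * x + 2 * c23 * y) • R3 := by
  have := hrefl_comb h.sq3 (by rw [add_comm]; exact h.m13) (by rw [add_comm]; exact h.m23) z x y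
  have e : ∀ t : ℝ, x • R1 + y • R2 + t • R3 = t • R3 + x • R1 + y • R2 := fun t => by abel
  rw [e, e]
  exact this

theorem Refl3.move (h : Refl3 R1 R2 R3 c12 c13 c23 l) {m : ℝ} (hm : 0 ≤ m) {g g' : Bool}
    (hg : g ≠ g') {U : Matrix (Fin 2) (Fin 2) ℝ} (hU : DomV R1 R2 R3 g m U) :
    DomV R1 R2 R3 g' ((2 * l - 1) * m) (hrefl (side R1 R3 g') U) := by
  obtain ⟨x, y, z, rfl, hd⟩ := hU
  cases g <;> cases g' <;> simp only [ne_eq, not_true_eq_false] at hg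
  · refine ⟨_, _, _, h.s1 x y z, ?_⟩
    simp only [if_true]
    simp only [Bool.false_eq_true, if_false] at hd
    have := (hd.step hm h.hl h.h13 h.h12).swap
    convert this using 1
    ring
  · refine ⟨_, _, _, h.s3 x y z, ?_⟩
    simp only [Bool.false_eq_true, if_false]
    simp only [if_true] at hd
    exact hd.swap.step hm h.hl h.h13 h.h23

theorem Refl3.move2 (h : Refl3 R1 R2 R3 c12 c13 c23 l) {m : ℝ} (hm : 0 ≤ m) {g g' : Bool}
    {U : Matrix (Fin 2) (Fin 2) ℝ} (hU : DomV R1 R2 R3 g m U) :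
    DomV R1 R2 R3 g' ((2 * l - 1) * m) (hrefl (side R1 R3 g') (hrefl R2 U)) := by
  obtain ⟨x, y, z, rfl, hd⟩ := hU
  have hl := h.hl
  set k := 2 * l - 1
  have hk : 1 ≤ k := by simp only [k]; linarith
  have hkm : k * m ≤ k * (k * m) := le_mul_of_one_le_left (by positivity) hk
  have hd2 : Dom (k * m) (-y + 2 * c12 * x + 2 * c23 * z) x z := by
    cases g
    · simp only [Bool.false_eq_true, if_false] at hd
      have := (hd.swap.step hm h.hl h.h23 h.h12).swap
      convert this using 1
      ring
    · simp only [if_true] at hd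
      exact hd.step hm h.hl h.h12 h.h23
  rw [h.s2]
  cases g'
  · refine ⟨_, _, _, h.s3 _ _ _, ?_⟩
    simp only [Bool.false_eq_true, if_false]
    have := ((hd2.swap.step (by positivity) h.hl h.h23 h.h13).swap).mono hkm
    convert this using 1
    ring
  · refine ⟨_, _, _, h.s1 _ _ _, ?_⟩
    simp only [if_true]
    exact (hd2.step (by positivity) h.hl h.h12 h.h13).mono hkm

/-- The action by conjugation of the letter `(g, e)`: the generator `R₁R₂` or `R₂R₃`, according
to `g`, or its inverse, according to `e`. -/
def letterAct (R1 R2 R3 : Matrix (Fin 2) (Fin 2) ℝ) (g e : Bool)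
    (Y : Matrix (Fin 2) (Fin 2) ℝ) : Matrix (Fin 2) (Fin 2) ℝ :=
  if g = e then hrefl (side R1 R3 g) (hrefl R2 Y) else hrefl R2 (hrefl (side R1 R3 g) Y)

/-- The cone reached after a reduced word with leading letter `(g, e)`. -/
def Good (R1 R2 R3 : Matrix (Fin 2) (Fin 2) ℝ) (m : ℝ) (g e : Bool)
    (Y : Matrix (Fin 2) (Fin 2) ℝ) : Prop :=
  ∃ U, DomV R1 R2 R3 g m U ∧ Y = if g = e then U else hrefl R2 U

/-- Unless two consecutive letters cancel, the second one maps the cone of the first one into its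
own cone, with expansion. -/
theorem Refl3.good_step (h : Refl3 R1 R2 R3 c12 c13 c23 l) {m : ℝ} (hm : 0 ≤ m)
    {g e g' e' : Bool} (hred : g' = g → e' = e) {Y : Matrix (Fin 2) (Fin 2) ℝ}
    (hY : Good R1 R2 R3 m g e Y) :
    Good R1 R2 R3 ((2 * l - 1) * m) g' e' (letterAct R1 R2 R3 g' e' Y) := by
  obtain ⟨U, hU, rfl⟩ := hY
  by_cases h1 : g = e <;> by_cases h2 : g' = e' <;> simp only [letterAct, h1, h2, if_true, if_false]
  · exact ⟨_, h.move2 hm (h1 ▸ hU), by simp⟩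
  · subst h1
    exact ⟨_, h.move hm (g' := g') (fun h3 => h2 (h3 ▸ (hred h3.symm).symm)) hU, by simp [h2]⟩
  · subst h2
    rw [hrefl_hrefl h.sq2]
    exact ⟨_, h.move hm (g' := g') (fun h3 => h1 (by rw [h3]; exact hred h3.symm)) hU, by simp⟩
  · exact ⟨_, h.move2 hm hU, by simp [h2]⟩

/-- A nonempty reduced word maps the base point `R1 + R2 + R3` into the cone of its leading letter, with
exponential expansion in its length. -/
theorem Refl3.good_list (h : Refl3 R1 R2 R3 c12 c13 c23 l) (L : List (Bool × Bool))
    (x : Bool × Bool) (hL : FreeGroup.IsReduced (x :: L)) :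
    Good R1 R2 R3 ((2 * l - 1) ^ (L.length + 1)) x.1 x.2
      ((x :: L).foldr (fun y Y => letterAct R1 R2 R3 y.1 y.2 Y) (R1 + R2 + R3)) := by
  have hl := h.hl
  have hk : 0 ≤ 2 * l - 1 := by linarith
  induction L generalizing x with
  | nil =>
    have base : ∀ g, Good R1 R2 R3 1 g g (R1 + R2 + R3) := by
      intro g
      refine ⟨_, ⟨1, 1, 1, rfl, ?_⟩, by simp⟩
      cases g <;> simp [Dom]
    obtain ⟨g, e⟩ := x
    simp only [List.length_nil, zero_add, pow_one, List.foldr_cons, List.foldr_nil]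
    have := h.good_step zero_le_one (g' := g) (e' := e) (Y := R1 + R2 + R3) (g := e) (e := e)
      (fun _ => rfl) (base e)
    rwa [mul_one] at this
  | cons y L ih =>
    rw [FreeGroup.IsReduced.eq_1, List.isChain_cons_cons] at hL
    have := h.good_step (pow_nonneg hk _) (g' := x.1) (e' := x.2) hL.1 (ih y hL.2)
    rw [← pow_succ'] at this
    exact this

/-- The expansion of a point is read off from a linear functional. -/
theorem Refl3.trace_good (h : Refl3 R1 R2 R3 c12 c13 c23 l) {m : ℝ} (hm : 0 ≤ m) {g e : Bool}
    {Y : Matrix (Fin 2) (Fin 2) ℝ} (hY : Good R1 R2 R3 m g e Y) :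
    2 * (l - 1) * m ≤ |(Y * R2).trace| := by
  obtain ⟨U, ⟨x, y, z, rfl, hd⟩, rfl⟩ := hY
  have key : 2 * (l - 1) * m ≤ |((x • R1 + y • R2 + z • R3) * R2).trace| := by
    have e1 : ((x • R1 + y • R2 + z • R3) * R2).trace = -(2 * (c12 * x - y + c23 * z)) := by
      rw [add_mul, add_mul, Matrix.trace_add, Matrix.trace_add, smul_mul_assoc, smul_mul_assoc,
        smul_mul_assoc, Matrix.trace_smul, Matrix.trace_smul, Matrix.trace_smul, h.sq2,
        trace_mul_of_anticomm h.m12, Matrix.trace_mul_comm R3, trace_mul_of_anticomm h.m23]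
      simp
      ring
    rw [e1, abs_neg]
    refine le_trans ?_ (le_abs_self _)
    have hl := h.hl
    cases g
    · simp only [Bool.false_eq_true, if_false] at hd
      obtain ⟨h1, h2, h3, h4, h5⟩ := hd
      have := mul_nonneg (by linarith [h.h12] : 0 ≤ c12) h2
      have := mul_le_mul h.h23 h1 hm (by linarith [h.h23])
      have := mul_le_mul_of_nonneg_right h.h23 (hm.trans h1)
      nlinarith
    · simp only [if_true] at hd
      obtain ⟨h1, h2, h3, h4, h5⟩ := hd
      have := mul_nonneg (by linarith [h.h23] : 0 ≤ c23) h4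
      have := mul_le_mul_of_nonneg_right h.h12 (hm.trans h1)
      nlinarith
  split_ifs
  · exact key
  · rw [trace_hrefl_mul h.sq2, abs_neg]
    exact key

/-- A pair which acts by conjugation as the two products `R₁R₂`, `R₂R₃` is group-hyperbolic. The square root
in the constants appears because the norm of a matrix enters the conjugation action twice. -/
theorem Refl3.groupHyp (h : Refl3 R1 R2 R3 c12 c13 c23 l) {A B : SL2}
    (hact : ∀ g e Y, ((cond e (if g then A else B) (if g then A else B)⁻¹ : SL2) :
        Matrix (Fin 2) (Fin 2) ℝ) * Y *
      (((cond e (if g then A else B) (if g then A else B)⁻¹)⁻¹ : SL2) :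
        Matrix (Fin 2) (Fin 2) ℝ) = letterAct R1 R2 R3 g e Y) : GroupHyp A B := by
  have hl := h.hl
  set X := R1 + R2 + R3 with hX
  have conj : ∀ L : List (Bool × Bool),
      ((FreeGroup.lift (fun b => if b then A else B) (FreeGroup.mk L) : SL2) :
        Matrix (Fin 2) (Fin 2) ℝ) * X *
      (((FreeGroup.lift (fun b => if b then A else B) (FreeGroup.mk L))⁻¹ : SL2) :
        Matrix (Fin 2) (Fin 2) ℝ) =
      L.foldr (fun y Y => letterAct R1 R2 R3 y.1 y.2 Y) X := by
    intro L
    rw [FreeGroup.lift_mk]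
    induction L with
    | nil => simp
    | cons y L ih =>
      rw [List.map_cons, List.prod_cons, List.foldr_cons, ← ih, ← hact, _root_.mul_inv_rev]
      simp only [Matrix.SpecialLinearGroup.coe_mul, mul_assoc]
  set k := 2 * l - 1 with hk
  have hk1 : 1 < k := by rw [hk]; linarith
  have hk0 : 0 < k := by linarith
  set D := 8 * (opNorm X * opNorm R2 + 1) with hD
  have hXR : 0 ≤ opNorm X * opNorm R2 := mul_nonneg (opNorm_nonneg _) (opNorm_nonneg _)
  have hD0 : 0 < D := by rw [hD]; linarith
  refine ⟨Real.sqrt (2 * (l - 1) / D), Real.sqrt_pos.2 (div_pos (by linarith) hD0),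
    Real.log k / 2, by have := Real.log_pos hk1; positivity, fun g hg => ?_⟩
  have hw : g.toWord ≠ [] := by
    intro h0
    exact hg (FreeGroup.toWord_eq_nil_iff.1 h0)
  obtain ⟨x, L, hxL⟩ := List.exists_cons_of_ne_nil hw
  have hred : FreeGroup.IsReduced (x :: L) := hxL ▸ FreeGroup.isReduced_toWord
  have h1 := h.trace_good (pow_nonneg hk0.le _) (h.good_list L x hred)
  rw [← hxL, ← hX, ← conj, FreeGroup.mk_toWord] at h1
  set M := FreeGroup.lift (fun b => if b then A else B) g
  have hlen : g.toWord.length = L.length + 1 := by rw [hxL, List.length_cons]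
  rw [← hlen] at h1
  set n := g.toWord.length
  have h2 : 2 * (l - 1) * k ^ n ≤ D * opNorm (M : Matrix (Fin 2) (Fin 2) ℝ) ^ 2 := by
    refine h1.trans ((abs_trace_le_opNorm _).trans ?_)
    have a1 := opNorm_mul ((M : Matrix (Fin 2) (Fin 2) ℝ) * X * ((M⁻¹ : SL2) :
      Matrix (Fin 2) (Fin 2) ℝ)) R2
    have a2 := opNorm_mul ((M : Matrix (Fin 2) (Fin 2) ℝ) * X) ((M⁻¹ : SL2) :
      Matrix (Fin 2) (Fin 2) ℝ)
    have a3 := opNorm_mul (M : Matrix (Fin 2) (Fin 2) ℝ) X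
    have a4 := opNorm_inv_le M
    set u := opNorm (M : Matrix (Fin 2) (Fin 2) ℝ)
    have hu : 0 ≤ u := opNorm_nonneg _
    have a5 := mul_le_mul a3 a4 (opNorm_nonneg _) (mul_nonneg hu (opNorm_nonneg _))
    have a6 := mul_le_mul_of_nonneg_right (a2.trans a5) (opNorm_nonneg R2)
    have : D * u ^ 2 = 2 * (u * opNorm X * (4 * u) * opNorm R2) + 8 * u ^ 2 := by
      rw [hD]; ring
    nlinarith [sq_nonneg u]
  have h3 : Real.exp (Real.log k / 2 * n) ^ 2 = k ^ n := by
    rw [← Real.exp_nat_mul, show ((2 : ℕ) : ℝ) * (Real.log k / 2 * n) = n * Real.log k by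
      push_cast; ring, Real.exp_nat_mul, Real.exp_log hk0]
  have hfin : (Real.sqrt (2 * (l - 1) / D) * Real.exp (Real.log k / 2 * n)) ^ 2 ≤
      opNorm (M : Matrix (Fin 2) (Fin 2) ℝ) ^ 2 := by
    rw [mul_pow, Real.sq_sqrt (div_nonneg (by linarith) hD0.le), h3, div_mul_eq_mul_div,
      div_le_iff₀ hD0]
    linarith
  exact (abs_le_of_sq_le_sq' hfin (opNorm_nonneg _)).2

end

/-! ### Pairs with `tr A · tr B · tr AB < 0` -/

theorem adj_add (A : SL2) : (A : Matrix (Fin 2) (Fin 2) ℝ) + (A⁻¹ : SL2) =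
    trace2 A • (1 : Matrix (Fin 2) (Fin 2) ℝ) := by
  rw [Matrix.SpecialLinearGroup.coe_inv, Matrix.adjugate_fin_two, trace2_eq]
  ext i j
  fin_cases i <;> fin_cases j <;> (simp; try ring)

theorem SL2.coe_mul_coe_inv (A : SL2) : (A : Matrix (Fin 2) (Fin 2) ℝ) * (A⁻¹ : SL2) = 1 := by
  rw [← Matrix.SpecialLinearGroup.coe_mul, mul_inv_cancel, Matrix.SpecialLinearGroup.coe_one]

theorem SL2.coe_inv_mul_coe (A : SL2) : ((A⁻¹ : SL2) : Matrix (Fin 2) (Fin 2) ℝ) * A = 1 := by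
  rw [← Matrix.SpecialLinearGroup.coe_mul, inv_mul_cancel, Matrix.SpecialLinearGroup.coe_one]

/-- The Markov-type invariant `tr [A,B]` written in terms of the three traces. -/
def kap (p : SL2 × SL2) : ℝ :=
  trace2 p.1 ^ 2 + trace2 p.2 ^ 2 + trace2 (p.1 * p.2) ^ 2
    - trace2 p.1 * trace2 p.2 * trace2 (p.1 * p.2) - 2

/-- If `κ > 2`, a multiple of the commutator `AB - BA` is an involution which conjugates `A` and
`B` to their inverses. -/
theorem exists_involution (A B : SL2) (h : 2 < kap (A, B)) :
    ∃ R : Matrix (Fin 2) (Fin 2) ℝ, R * R = 1 ∧ (A : Matrix (Fin 2) (Fin 2) ℝ) * R = R * (A⁻¹ : SL2) ∧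
      (B : Matrix (Fin 2) (Fin 2) ℝ) * R = R * (B⁻¹ : SL2) := by
  set N : Matrix (Fin 2) (Fin 2) ℝ := A.1 * B.1 - B.1 * A.1 with hN
  have hA := det_eq A
  have hB := det_eq B
  have hk : 0 < kap (A, B) - 2 := by linarith
  have hNN : N * N = (kap (A, B) - 2) • (1 : Matrix (Fin 2) (Fin 2) ℝ) := by
    unfold kap
    simp only [trace2_eq, mul_entry]
    rw [hN]
    generalize A.1 = a at *
    generalize B.1 = b at *
    ext i j
    fin_cases i <;> fin_cases j <;> simp [Matrix.mul_apply, Fin.sum_univ_two]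
    · linear_combination ((b 0 0 + b 1 1)^2 - 4 * (b 0 0 * b 1 1 - b 0 1 * b 1 0)) * hA +
        ((a 0 0 + a 1 1)^2 - 4) * hB
    · ring
    · ring
    · linear_combination ((b 0 0 + b 1 1)^2 - 4 * (b 0 0 * b 1 1 - b 0 1 * b 1 0)) * hA +
        ((a 0 0 + a 1 1)^2 - 4) * hB
  have hs := Real.mul_self_sqrt hk.le
  have hs0 := Real.sqrt_pos.2 hk
  set s := Real.sqrt (kap (A, B) - 2)
  have hAN : A.1 * N = N * (A⁻¹ : SL2) := by
    rw [Matrix.SpecialLinearGroup.coe_inv, Matrix.adjugate_fin_two, hN]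
    ext i j
    fin_cases i <;> fin_cases j <;> simp [Matrix.mul_apply, Fin.sum_univ_two] <;> ring
  have hBN : B.1 * N = N * (B⁻¹ : SL2) := by
    rw [Matrix.SpecialLinearGroup.coe_inv, Matrix.adjugate_fin_two, hN]
    ext i j
    fin_cases i <;> fin_cases j <;> simp [Matrix.mul_apply, Fin.sum_univ_two] <;> ring
  refine ⟨s⁻¹ • N, ?_, ?_, ?_⟩
  · rw [smul_mul_smul_comm, hNN, smul_smul, ← hs]
    have : s⁻¹ * s⁻¹ * (s * s) = 1 := by field_simp
    rw [this, one_smul]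
  · rw [mul_smul_comm, smul_mul_assoc, hAN]
  · rw [mul_smul_comm, smul_mul_assoc, hBN]

/-- A pair of hyperbolic matrices with hyperbolic product and `tr A · tr B · tr AB < 0`
generates, up to signs, the orientation-preserving part of a group generated by three reflections
in disjoint lines of the hyperbolic plane. -/
theorem groupHyp_of_neg {A B : SL2} (hx : 2 < |trace2 A|) (hy : 2 < |trace2 B|)
    (hz : 2 < |trace2 (A * B)|) (hneg : trace2 A * trace2 B * trace2 (A * B) < 0) :
    GroupHyp A B := by
  have hk : 2 < kap (A, B) := by
    unfold kap
    simp only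
    have h1 := sq_abs (trace2 A)
    have h2 := sq_abs (trace2 B)
    nlinarith [sq_nonneg (trace2 (A * B))]
  obtain ⟨R, hR, hAR, hBR⟩ := exists_involution A B hk
  have hA1 := SL2.coe_mul_coe_inv A
  have hA2 := SL2.coe_inv_mul_coe A
  have hB1 := SL2.coe_mul_coe_inv B
  have hB2 := SL2.coe_inv_mul_coe B
  have hAs := adj_add A
  have hBs := adj_add B
  have hABs := adj_add (A * B)
  rw [_root_.mul_inv_rev, Matrix.SpecialLinearGroup.coe_mul, Matrix.SpecialLinearGroup.coe_mul] at hABs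
  set x := trace2 A
  set y := trace2 B
  set z := trace2 (A * B)
  -- the three reflections are `e1 • A R`, `R`, `e3 • R B`; the sign condition on the traces is what
  -- allows signs `e1`, `e3` for which all three sums `Rᵢ Rⱼ + Rⱼ Rᵢ` are negative
  obtain ⟨e1, he1, hex⟩ : ∃ e1 : ℝ, e1 * e1 = 1 ∧ e1 * x = -|x| := by
    rcases abs_cases x with h | h
    · exact ⟨-1, by norm_num, by linarith⟩
    · exact ⟨1, by norm_num, by linarith⟩
  obtain ⟨e3, he3, hey⟩ : ∃ e1 : ℝ, e1 * e1 = 1 ∧ e1 * y = -|y| := by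
    rcases abs_cases y with h | h
    · exact ⟨-1, by norm_num, by linarith⟩
    · exact ⟨1, by norm_num, by linarith⟩
  have hez : e1 * e3 * z = -|z| := by
    have h1 : 0 < |x| * |y| := by positivity
    have h2 : e1 * e3 * (x * y) = |x| * |y| := by linear_combination e3 * y * hex - |x| * hey
    have h3 : (x * y) ^ 2 = (|x| * |y|) ^ 2 := by rw [mul_pow, mul_pow, sq_abs, sq_abs]
    rcases lt_or_ge 0 z with h | h
    · rw [abs_of_pos h]
      have h4 : x * y < 0 := by nlinarith
      have h5 : x * y = -(|x| * |y|) := by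
        rcases sq_eq_sq_iff_eq_or_eq_neg.1 h3 with h6 | h6 <;> linarith
      have h6 : e1 * e3 = -1 := by
        rw [h5] at h2
        have : (|x| * |y|) * (e1 * e3 + 1) = 0 := by linarith
        rcases mul_eq_zero.1 this with h7 | h7 <;> linarith
      rw [h6]; ring
    · rw [abs_of_nonpos h]
      have h4 : 0 < x * y := by
        by_contra! hc
        nlinarith [mul_nonneg_of_nonpos_of_nonpos hc h]
      have h5 : x * y = (|x| * |y|) := by
        rcases sq_eq_sq_iff_eq_or_eq_neg.1 h3 with h6 | h6 <;> linarith
      have h6 : e1 * e3 = 1 := by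
        rw [h5] at h2
        have : (|x| * |y|) * (e1 * e3 - 1) = 0 := by linarith
        rcases mul_eq_zero.1 this with h7 | h7 <;> linarith
      rw [h6]; ring
  have hact : ∀ (a a' r1 r3 : Matrix (Fin 2) (Fin 2) ℝ) (e : ℝ), e * e = 1 → a * R = R * a' →
      a' * R = R * a → r1 = e • (a * R) → r3 = e • (R * a) →
      (∀ Y, hrefl r1 (hrefl R Y) = a * Y * a') ∧ (∀ Y, hrefl R (hrefl r1 Y) = a' * Y * a) ∧
      (∀ Y, hrefl r3 (hrefl R Y) = a' * Y * a) ∧ (∀ Y, hrefl R (hrefl r3 Y) = a * Y * a') := by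
    rintro a a' r1 r3 e he h1 h2 rfl rfl
    have k1 : ∀ u, R * (R * u) = u := fun u => by rw [← mul_assoc, hR, one_mul]
    have k2 : ∀ u, a * (R * u) = R * (a' * u) := fun u => by
      rw [← mul_assoc, h1, mul_assoc]
    have k3 : ∀ u, a' * (R * u) = R * (a * u) := fun u => by
      rw [← mul_assoc, h2, mul_assoc]
    have k4 : ∀ u : Matrix (Fin 2) (Fin 2) ℝ, e • e • u = u := fun u => by
      rw [smul_smul, he, one_smul]
    refine ⟨fun Y => ?_, fun Y => ?_, fun Y => ?_, fun Y => ?_⟩ <;>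
    · unfold hrefl
      simp only [mul_neg, neg_mul, smul_neg, neg_neg, smul_mul_assoc, mul_smul_comm, mul_assoc, k1, k2, k3,
        k4, h1, h2]
  have hAR' : ((A⁻¹ : SL2) : Matrix (Fin 2) (Fin 2) ℝ) * R = R * A := by
    have : ((A⁻¹ : SL2) : Matrix (Fin 2) (Fin 2) ℝ) * R =
        R * (R * (A⁻¹ : SL2)) * R := by rw [← mul_assoc, hR, one_mul]
    rw [this, ← hAR, mul_assoc, mul_assoc, hR, mul_one]
  have hBR' : ((B⁻¹ : SL2) : Matrix (Fin 2) (Fin 2) ℝ) * R = R * B := by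
    have : ((B⁻¹ : SL2) : Matrix (Fin 2) (Fin 2) ℝ) * R =
        R * (R * (B⁻¹ : SL2)) * R := by rw [← mul_assoc, hR, one_mul]
    rw [this, ← hBR, mul_assoc, mul_assoc, hR, mul_one]
  obtain ⟨a1, a2, -, -⟩ := hact A (A⁻¹ : SL2) _ _ e1 he1 hAR hAR' rfl rfl
  obtain ⟨-, -, b3, b4⟩ := hact B (B⁻¹ : SL2) _ _ e3 he3 hBR hBR' rfl rfl
  have hrefl3 : Refl3 (e1 • ((A : Matrix (Fin 2) (Fin 2) ℝ) * R)) R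
      (e3 • (R * (B : Matrix (Fin 2) (Fin 2) ℝ)))
      (|x| / 2) (|z| / 2) (|y| / 2) (min (min (|x| / 2) (|y| / 2)) (|z| / 2)) := by
    have k1 : ∀ u, R * (R * u) = u := fun u => by rw [← mul_assoc, hR, one_mul]
    generalize ((A⁻¹ : SL2) : Matrix (Fin 2) (Fin 2) ℝ) = a' at *
    generalize ((B⁻¹ : SL2) : Matrix (Fin 2) (Fin 2) ℝ) = b' at *
    refine ⟨?_, (min_le_left _ _).trans (min_le_left _ _), min_le_right _ _,
      (min_le_left _ _).trans (min_le_right _ _), ?_, hR, ?_, ?_, ?_, ?_⟩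
    · rw [lt_min_iff, lt_min_iff]
      refine ⟨⟨?_, ?_⟩, ?_⟩ <;> linarith
    · rw [smul_mul_smul_comm, he1, one_smul, mul_assoc, ← mul_assoc R, ← hAR', mul_assoc, hR,
        mul_one, hA1]
    · rw [smul_mul_smul_comm, he3, one_smul, mul_assoc, ← mul_assoc _ R, hBR, ← mul_assoc,
        ← mul_assoc, hR, one_mul, hB2]
    · rw [smul_mul_assoc, mul_smul_comm, ← smul_add, mul_assoc, hR, hAR, k1, mul_one, hAs,
        smul_smul, hex]
      congr 1; ring
    · rw [smul_mul_smul_comm, smul_mul_smul_comm, mul_comm e3 e1, ← smul_add]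
      have t1 : A.1 * R * (R * B.1) = A.1 * B.1 := by
        rw [mul_assoc, k1]
      have t2 : R * B.1 * (A.1 * R) = b' * a' := by
        rw [hAR, mul_assoc, ← mul_assoc _ R, hBR, ← mul_assoc, ← mul_assoc, hR, one_mul]
      rw [t1, t2, hABs, smul_smul, hez]
      congr 1; ring
    · rw [smul_mul_assoc, mul_smul_comm, ← smul_add, k1, mul_assoc, hBR, k1, hBs,
        smul_smul, hey]
      congr 1; ring
  refine hrefl3.groupHyp fun g e Y => ?_
  cases g <;> cases e <;> simp [letterAct, side, a1, a2, b3, b4]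

/-! ### Conjugation, sign changes and positive pairs -/

/-- The element of `SL(2,ℝ)` with prescribed entries. -/
def mkSL (a b c d : ℝ) (h : a * d - b * c = 1) : SL2 :=
  ⟨!![a, b; c, d], by rw [Matrix.det_fin_two_of]; exact h⟩

theorem inv_entries (A : SL2) : ((A⁻¹ : SL2) : Matrix (Fin 2) (Fin 2) ℝ) =
    !![A.1 1 1, -A.1 0 1; -A.1 1 0, A.1 0 0] := by
  rw [Matrix.SpecialLinearGroup.coe_inv, Matrix.adjugate_fin_two]

/-- Simultaneous conjugation of a pair. -/
def conjP (g : SL2) (p : SL2 × SL2) : SL2 × SL2 := (g * p.1 * g⁻¹, g * p.2 * g⁻¹)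

theorem conjP_mul (g h : SL2) (p : SL2 × SL2) : conjP g (conjP h p) = conjP (g * h) p := by
  simp [conjP, mul_assoc]

theorem conjP_one (p : SL2 × SL2) : conjP 1 p = p := by simp [conjP]

theorem trace2_conj (g A : SL2) : trace2 (g * A * g⁻¹) = trace2 A := by
  rw [trace2_mul_comm, ← mul_assoc, inv_mul_cancel, one_mul]

theorem trace2_conj_mul (g A B : SL2) : trace2 (g * A * g⁻¹ * (g * B * g⁻¹)) = trace2 (A * B) := by
  rw [← trace2_conj g (A * B)]
  congr 1
  group

theorem pairProd_conj (g A B : SL2) (w : List Bool) :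
    pairProd (g * A * g⁻¹) (g * B * g⁻¹) w = g * pairProd A B w * g⁻¹ := by
  induction w with
  | nil => simp [pairProd]
  | cons b w ih =>
    rw [pairProd_cons, pairProd_cons, ih]
    cases b <;> simp [mul_assoc]

theorem unifHypPair_conj {p : SL2 × SL2} (g : SL2) (h : p ∈ UHpairs) : conjP g p ∈ UHpairs := by
  obtain ⟨C, hC, l, hl, h⟩ := h
  set D := opNorm (g⁻¹ : SL2) * opNorm g + 1 with hD
  have h0 := mul_nonneg (opNorm_nonneg (g⁻¹ : SL2)) (opNorm_nonneg g)
  have hD0 : 0 < D := by linarith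
  refine ⟨C / D, by positivity, l, hl, fun w hw => ?_⟩
  simp only [conjP]
  rw [pairProd_conj]
  set M := pairProd p.1 p.2 w with hM
  have e : (M : Matrix (Fin 2) (Fin 2) ℝ) = (g⁻¹ : SL2) * ((g * M * g⁻¹ : SL2) :
      Matrix (Fin 2) (Fin 2) ℝ) * g := by
    rw [← Matrix.SpecialLinearGroup.coe_mul, ← Matrix.SpecialLinearGroup.coe_mul]
    simp [mul_assoc]
  have h1 := h w hw
  rw [← hM, e] at h1
  have h2 := opNorm_mul ((g⁻¹ : SL2) * ((g * M * g⁻¹ : SL2) : Matrix (Fin 2) (Fin 2) ℝ)) g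
  have h3 := mul_le_mul_of_nonneg_right (opNorm_mul (g⁻¹ : SL2)
    ((g * M * g⁻¹ : SL2) : Matrix (Fin 2) (Fin 2) ℝ)) (opNorm_nonneg g)
  have h4 := opNorm_nonneg ((g * M * g⁻¹ : SL2) : Matrix (Fin 2) (Fin 2) ℝ)
  rw [ge_iff_le, div_mul_eq_mul_div, div_le_iff₀ hD0]
  nlinarith

/-- The sign `1` or `-1` encoded by a Boolean. -/
def sg (b : Bool) : ℝ := if b then 1 else -1

theorem sg_mul_self (b : Bool) : sg b * sg b = 1 := by cases b <;> simp [sg]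

/-- Sign change of a matrix. -/
def flip1 (b : Bool) (A : SL2) : SL2 := if b then A else -A

/-- Sign changes of the two members of a pair. -/
def flipP (s t : Bool) (p : SL2 × SL2) : SL2 × SL2 := (flip1 s p.1, flip1 t p.2)

theorem flip1_entry (b : Bool) (A : SL2) (i j : Fin 2) : (flip1 b A).1 i j = sg b * A.1 i j := by
  cases b <;> simp [flip1, sg]

theorem flip1_flip1 (b : Bool) (A : SL2) : flip1 b (flip1 b A) = A := by
  cases b <;> simp [flip1]

theorem flipP_flipP (s t : Bool) (p : SL2 × SL2) : flipP s t (flipP s t p) = p := by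
  simp [flipP, flip1_flip1]

theorem trace2_flip1 (b : Bool) (A : SL2) : trace2 (flip1 b A) = sg b * trace2 A := by
  rw [trace2_eq, trace2_eq, flip1_entry, flip1_entry]; ring

theorem trace2_flip_mul (s t : Bool) (A B : SL2) :
    trace2 (flip1 s A * flip1 t B) = sg s * sg t * trace2 (A * B) := by
  simp only [trace2_eq, mul_entry, flip1_entry]; ring

theorem continuous_flipP (s t : Bool) : Continuous (flipP s t) := by
  have h : ∀ b, Continuous (flip1 b) := fun b => continuous_SL2_mk fun i j => by
    simp only [flip1_entry]
    exact continuous_const.mul (continuous_entry i j)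
  exact ((h s).comp continuous_fst).prodMk ((h t).comp continuous_snd)

theorem unifHypPair_flip {p : SL2 × SL2} (s t : Bool) (h : p ∈ UHpairs) :
    flipP s t p ∈ UHpairs := by
  obtain ⟨C, hC, l, hl, h⟩ := h
  refine ⟨C, hC, l, hl, fun w hw => ?_⟩
  have key : ∀ w : List Bool, pairProd (flipP s t p).1 (flipP s t p).2 w = pairProd p.1 p.2 w ∨
      pairProd (flipP s t p).1 (flipP s t p).2 w = -pairProd p.1 p.2 w := by
    intro w
    induction w with
    | nil => simp [pairProd]
    | cons b w ih =>
      rw [pairProd_cons, pairProd_cons]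
      rcases ih with ih | ih <;> rw [ih] <;> cases b <;> cases s <;> cases t <;>
        simp [flipP, flip1]
  rcases key w with e | e <;> rw [e]
  · exact h w hw
  · rw [Matrix.SpecialLinearGroup.coe_neg, opNorm_neg]
    exact h w hw

/-- A matrix with positive entries. -/
def PosM (A : SL2) : Prop := ∀ i j, 0 < A.1 i j

/-- Positive matrices expand the product of the coordinates of a positive vector, by a factor
`1 + 2 m` where `m` bounds the products of the off-diagonal entries from below. -/
theorem unifHypPair_of_pos {p : SL2 × SL2} (h1 : PosM p.1) (h2 : PosM p.2) : p ∈ UHpairs := by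
  set m := min (p.1.1 0 1 * p.1.1 1 0) (p.2.1 0 1 * p.2.1 1 0) with hm
  have hm0 : 0 < m := lt_min (mul_pos (h1 0 1) (h1 1 0)) (mul_pos (h2 0 1) (h2 1 0))
  set k := 1 + 2 * m with hk
  have hk1 : 1 < k := by linarith
  have step : ∀ A : SL2, PosM A → m ≤ A.1 0 1 * A.1 1 0 → ∀ u v : ℝ, 0 < u → 0 < v →
      k * (u * v) ≤ (A.1 0 0 * u + A.1 0 1 * v) * (A.1 1 0 * u + A.1 1 1 * v) := by
    intro A hA hmA u v hu hv
    have e := det_eq A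
    have a1 := mul_pos (mul_pos (hA 0 0) (hA 1 0)) (mul_pos hu hu)
    have a2 := mul_pos (mul_pos (hA 0 1) (hA 1 1)) (mul_pos hv hv)
    have a3 := mul_le_mul_of_nonneg_right hmA (mul_pos hu hv).le
    have e2 : A.1 0 0 * A.1 1 1 * (u * v) = (1 + A.1 0 1 * A.1 1 0) * (u * v) := by
      linear_combination (u * v) * e
    nlinarith
  have key : ∀ (w : List Bool) (u v : ℝ), 0 < u → 0 < v →
      k ^ w.length * (u * v) ≤
        ((pairProd p.1 p.2 w).1 0 0 * u + (pairProd p.1 p.2 w).1 0 1 * v) *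
        ((pairProd p.1 p.2 w).1 1 0 * u + (pairProd p.1 p.2 w).1 1 1 * v) := by
    intro w
    induction w with
    | nil => intro u v _ _; simp [pairProd]
    | cons b w ih =>
      intro u v hu hv
      have hX : ∃ X, X = (if b then p.1 else p.2) ∧ PosM X ∧ m ≤ X.1 0 1 * X.1 1 0 := by
        cases b
        · exact ⟨p.2, rfl, h2, min_le_right _ _⟩
        · exact ⟨p.1, rfl, h1, min_le_left _ _⟩
      obtain ⟨X, hX, hX1, hX2⟩ := hX
      rw [pairProd_cons, ← hX]
      have i1 := ih (X.1 0 0 * u + X.1 0 1 * v) (X.1 1 0 * u + X.1 1 1 * v)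
        (add_pos (mul_pos (hX1 _ _) hu) (mul_pos (hX1 _ _) hv))
        (add_pos (mul_pos (hX1 _ _) hu) (mul_pos (hX1 _ _) hv))
      have i2 := mul_le_mul_of_nonneg_left (step X hX1 hX2 u v hu hv)
        (pow_nonneg (by linarith : 0 ≤ k) w.length)
      simp only [mul_entry]
      rw [List.length_cons, pow_succ]
      nlinarith
  refine ⟨1 / 2, by norm_num, Real.sqrt k, by
    rw [gt_iff_lt, Real.lt_sqrt] <;> linarith, fun w _ => ?_⟩
  have := key w 1 1 one_pos one_pos
  simp only [mul_one] at this
  set M := pairProd p.1 p.2 w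
  have b1 : |M.1 0 0 + M.1 0 1| ≤ 2 * opNorm M := by
    have := abs_add_le (M.1 0 0) (M.1 0 1)
    linarith [abs_entry_le_opNorm M.1 0 0, abs_entry_le_opNorm M.1 0 1]
  have b2 : |M.1 1 0 + M.1 1 1| ≤ 2 * opNorm M := by
    have := abs_add_le (M.1 1 0) (M.1 1 1)
    linarith [abs_entry_le_opNorm M.1 1 0, abs_entry_le_opNorm M.1 1 1]
  have b3 := mul_le_mul b1 b2 (abs_nonneg _) ((abs_nonneg _).trans b1)
  rw [← abs_mul] at b3
  have b4 := (this.trans (le_abs_self _)).trans b3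
  refine (abs_le_of_sq_le_sq' ?_ (opNorm_nonneg _)).2
  rw [mul_pow, ← pow_mul, mul_comm w.length 2, pow_mul, Real.sq_sqrt (by linarith)]
  nlinarith

/-! ### The principal components -/

/-- Pairs with traces larger than `2` whose product has a trace larger than the smaller root of
`κ = 2`, seen as a quadratic equation in `tr AB`. These are the simultaneous conjugates of pairs
of positive matrices. -/
def Pp : Set (SL2 × SL2) :=
  {p | 2 < trace2 p.1 ∧ 2 < trace2 p.2 ∧ trace2 p.1 * trace2 p.2 - 2 * trace2 (p.1 * p.2) <
    Real.sqrt ((trace2 p.1 ^ 2 - 4) * (trace2 p.2 ^ 2 - 4))}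

theorem conj_mem_Pp (g : SL2) {p : SL2 × SL2} (h : p ∈ Pp) : conjP g p ∈ Pp := by
  simp only [Pp, conjP, Set.mem_ofPred_eq, trace2_conj, trace2_conj_mul]
  exact h

theorem trace_gt_of_pos {A : SL2} (h : PosM A) : 2 < trace2 A := by
  have e := det_eq A
  rw [trace2_eq]
  have := mul_pos (h 0 1) (h 1 0)
  nlinarith [h 0 0, h 1 1, sq_nonneg (A.1 0 0 - A.1 1 1)]

theorem mem_Pp_of_pos {p : SL2 × SL2} (h1 : PosM p.1) (h2 : PosM p.2) : p ∈ Pp := by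
  refine ⟨trace_gt_of_pos h1, trace_gt_of_pos h2, ?_⟩
  have e1 := det_eq p.1
  have e2 := det_eq p.2
  set u := p.1.1 0 0 - p.1.1 1 1 with hu
  set v := p.2.1 0 0 - p.2.1 1 1 with hv
  have a1 := mul_pos (h1 0 1) (h1 1 0)
  have a2 := mul_pos (h2 0 1) (h2 1 0)
  have a3 := mul_pos (h1 0 1) (h2 1 0)
  have a4 := mul_pos (h1 1 0) (h2 0 1)
  have d1 : trace2 p.1 ^ 2 - 4 = u ^ 2 + 4 * (p.1.1 0 1 * p.1.1 1 0) := by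
    rw [trace2_eq, hu]; linear_combination 4 * e1
  have d2 : trace2 p.2 ^ 2 - 4 = v ^ 2 + 4 * (p.2.1 0 1 * p.2.1 1 0) := by
    rw [trace2_eq, hv]; linear_combination 4 * e2
  have d3 : trace2 p.1 * trace2 p.2 - 2 * trace2 (p.1 * p.2) =
      -(u * v) - 2 * (p.1.1 0 1 * p.2.1 1 0 + p.1.1 1 0 * p.2.1 0 1) := by
    simp only [trace2_eq, mul_entry, hu, hv]; ring
  have hlt : |u * v| < Real.sqrt ((trace2 p.1 ^ 2 - 4) * (trace2 p.2 ^ 2 - 4)) := by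
    apply Real.lt_sqrt_of_sq_lt
    rw [sq_abs, d1, d2]
    nlinarith [mul_nonneg (sq_nonneg u) a2.le, mul_nonneg (sq_nonneg v) a1.le, mul_pos a1 a2]
  rw [d3]
  linarith [neg_abs_le (u * v)]

/-- A quadratic polynomial `r t² + k t - q` with positive discriminant is positive somewhere on `t > 0`,
unless `k ≤ 0` and `q r ≤ 0`. The cases are `r > 0` (large `t`), `q < 0` (small `t`) and
`r ≤ 0 ≤ q` (the vertex). -/
theorem exists_pos_quad {r k q : ℝ} (hD : 0 < k ^ 2 + 4 * q * r) (h : 0 < k ∨ 0 < q * r) :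
    ∃ t > 0, 0 < r * t ^ 2 + k * t - q := by
  rcases lt_or_ge 0 r with hr | hr
  · refine ⟨1 + (|k| + |q|) / r, by positivity, ?_⟩
    set s := |k| + |q| with hs
    have hs0 : 0 ≤ s := by positivity
    have e : r * (1 + s / r) ^ 2 = (r + s) * (1 + s / r) := by field_simp
    have hsr : 0 ≤ s / r := by positivity
    rw [e]
    have := neg_abs_le k
    have := le_abs_self q
    nlinarith [abs_nonneg q, abs_nonneg k]
  rcases lt_or_ge q 0 with hq | hq
  · have hd : 0 < 1 + |k| + |r| + |q| := by positivity
    refine ⟨-q / (1 + |k| + |r| + |q|), div_pos (by linarith) hd, ?_⟩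
    set t := -q / (1 + |k| + |r| + |q|) with ht
    have ht0 : 0 < t := div_pos (by linarith) hd
    have e : t * (1 + |k| + |r| + |q|) = -q := by rw [ht]; field_simp
    have e1 : t ≤ 1 := by
      rw [ht, div_le_one hd, abs_of_neg hq]
      linarith [abs_nonneg k, abs_nonneg r]
    have := neg_abs_le k
    have := neg_abs_le r
    nlinarith [abs_nonneg q, abs_nonneg k, abs_nonneg r, mul_nonneg ht0.le (abs_nonneg r),
      mul_nonneg ht0.le (sub_nonneg.2 e1), mul_nonneg (mul_nonneg ht0.le (sub_nonneg.2 e1))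
        (abs_nonneg r), mul_nonneg ht0.le (abs_nonneg q), sq_nonneg t]
  · have hk : 0 < k := by
      rcases h with h | h
      · exact h
      · nlinarith [mul_nonneg hq (neg_nonneg.2 hr)]
    rcases eq_or_lt_of_le hr with hr | hr
    · refine ⟨(q + 1) / k, by positivity, ?_⟩
      have : k * ((q + 1) / k) = q + 1 := by field_simp
      rw [hr, this]; linarith
    · refine ⟨k / (-2 * r), div_pos hk (by linarith), ?_⟩
      have : r * (k / (-2 * r)) ^ 2 + k * (k / (-2 * r)) - q = (k ^ 2 + 4 * q * r) / (-4 * r) := by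
        have := hr.ne
        field_simp; ring
      rw [this]
      exact div_pos hD (by linarith)

theorem exists_eigen (A : SL2) {l : ℝ} (h : l ^ 2 - trace2 A * l + 1 = 0) :
    ∃ u v : ℝ, (u ≠ 0 ∨ v ≠ 0) ∧ A.1 0 0 * u + A.1 0 1 * v = l * u ∧
      A.1 1 0 * u + A.1 1 1 * v = l * v := by
  have hd : (A.1 - l • (1 : Matrix (Fin 2) (Fin 2) ℝ)).det = 0 := by
    have e := det_eq A
    rw [trace2_eq] at h
    rw [Matrix.det_fin_two]
    simp
    linear_combination h + e
  obtain ⟨v, hv, hv2⟩ := Matrix.exists_mulVec_eq_zero_iff.2 hd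
  have h0 := congrFun hv2 0
  have h1 := congrFun hv2 1
  simp [Matrix.mulVec, dotProduct, Fin.sum_univ_two] at h0 h1
  refine ⟨v 0, v 1, ?_, by linarith, by linarith⟩
  by_contra! hc
  exact hv (by ext i; fin_cases i <;> simp [hc])

theorem conj_mkSL_entries (X : SL2) {a b c d : ℝ} (h : a * d - b * c = 1) :
    ((mkSL a b c d h)⁻¹ * X * ((mkSL a b c d h)⁻¹)⁻¹).1 0 0 =
      d * (X.1 0 0 * a + X.1 0 1 * c) - b * (X.1 1 0 * a + X.1 1 1 * c) ∧
    ((mkSL a b c d h)⁻¹ * X * ((mkSL a b c d h)⁻¹)⁻¹).1 0 1 =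
      d * (X.1 0 0 * b + X.1 0 1 * d) - b * (X.1 1 0 * b + X.1 1 1 * d) ∧
    ((mkSL a b c d h)⁻¹ * X * ((mkSL a b c d h)⁻¹)⁻¹).1 1 0 =
      a * (X.1 1 0 * a + X.1 1 1 * c) - c * (X.1 0 0 * a + X.1 0 1 * c) ∧
    ((mkSL a b c d h)⁻¹ * X * ((mkSL a b c d h)⁻¹)⁻¹).1 1 1 =
      a * (X.1 1 0 * b + X.1 1 1 * d) - c * (X.1 0 0 * b + X.1 0 1 * d) := by
  rw [inv_inv]
  simp only [mul_entry, inv_entries]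
  simp only [mkSL, of_apply, cons_val', cons_val_zero, cons_val_fin_one, cons_val_one]
  refine ⟨?_, ?_, ?_, ?_⟩ <;> ring

/-- A matrix with trace `> 2` is conjugate to a diagonal one with decreasing entries. -/
theorem exists_diag (A : SL2) (h : 2 < trace2 A) : ∃ (g : SL2) (l : ℝ), 1 < l ∧
    (g * A * g⁻¹).1 0 0 = l ∧ (g * A * g⁻¹).1 1 1 = l⁻¹ ∧ (g * A * g⁻¹).1 0 1 = 0 ∧
      (g * A * g⁻¹).1 1 0 = 0 := by
  set x := trace2 A with hx
  have hs := Real.sq_sqrt (show 0 ≤ x ^ 2 - 4 by nlinarith)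
  have hs0 := Real.sqrt_pos.2 (show 0 < x ^ 2 - 4 by nlinarith)
  set s := Real.sqrt (x ^ 2 - 4)
  set l := (x + s) / 2 with hl
  have hl1 : 1 < l := by rw [hl]; linarith
  have hli : l⁻¹ = (x - s) / 2 := by
    refine inv_eq_of_mul_eq_one_right ?_
    rw [hl]; linear_combination (-1 / 4) * hs
  obtain ⟨u, v, huv, h1, h2⟩ := exists_eigen A (l := l) (by rw [← hx, hl]; nlinarith)
  obtain ⟨u', v', huv', h3, h4⟩ := exists_eigen A (l := l⁻¹) (by rw [← hx, hli]; nlinarith)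
  have hne : l - l⁻¹ ≠ 0 := by rw [hli, hl]; intro h; linarith
  have hdet : u * v' - v * u' ≠ 0 := by
    intro hc
    have k1 : (l - l⁻¹) * (u * u') = 0 := by
      linear_combination u * h3 - u' * h1 - A.1 0 1 * hc
    have k2 : (l - l⁻¹) * (v * v') = 0 := by
      linear_combination v * h4 - v' * h2 + A.1 1 0 * hc
    have k3 := (mul_eq_zero.1 k1).resolve_left hne
    have k4 := (mul_eq_zero.1 k2).resolve_left hne
    rcases mul_eq_zero.1 k3 with k5 | k5 <;> rcases mul_eq_zero.1 k4 with k6 | k6 <;>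
      simp [k5, k6] at hc huv huv' <;> simp_all
  set D := u * v' - v * u' with hD
  have hg : u * (v' / D) - u' / D * v = 1 := by
    field_simp; rw [hD]; ring
  refine ⟨(mkSL u (u' / D) v (v' / D) hg)⁻¹, l, hl1, ?_⟩
  obtain ⟨c1, c2, c3, c4⟩ := conj_mkSL_entries A hg
  rw [c1, c2, c3, c4]
  have k3 : A.1 0 0 * (u' / D) + A.1 0 1 * (v' / D) = l⁻¹ * (u' / D) := by
    linear_combination h3 / D
  have k4 : A.1 1 0 * (u' / D) + A.1 1 1 * (v' / D) = l⁻¹ * (v' / D) := by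
    linear_combination h4 / D
  rw [k3, k4, h1, h2]
  refine ⟨?_, ?_, by ring, by ring⟩
  · linear_combination l * hg
  · linear_combination l⁻¹ * hg

theorem posM_of_offdiag {X : SL2} (h1 : 2 < trace2 X) (h2 : 0 < X.1 0 1) (h3 : 0 < X.1 1 0) :
    PosM X := by
  have e := det_eq X
  rw [trace2_eq] at h1
  have h4 := mul_pos h2 h3
  have h5 : 0 < X.1 0 0 * X.1 1 1 := by linarith
  have h6 : 0 < X.1 0 0 := by
    rcases pos_and_pos_or_neg_and_neg_of_mul_pos h5 with h | h <;> linarith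
  have h7 : 0 < X.1 1 1 := (mul_pos_iff_of_pos_left h6).1 h5
  intro i j
  fin_cases i <;> fin_cases j <;> assumption

/-- When `A` is diagonal, the new frame consists of multiples of vectors `(t, -1)` and `(u, 1)`,
`t, u > 0`. In these quadrants `v ↦ det (v, A v)` is positive resp. negative, and `t`, `u` are chosen
so that the same holds for `B`; this makes the off-diagonal entries positive in the new frame. -/
theorem exists_conj_pos_of_diag {A B : SL2} (hp : (A, B) ∈ Pp) {l : ℝ} (hl : 1 < l)
    (f00 : A.1 0 0 = l) (f11 : A.1 1 1 = l⁻¹) (f01 : A.1 0 1 = 0) (f10 : A.1 1 0 = 0) :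
    ∃ g : SL2, PosM (conjP g (A, B)).1 ∧ PosM (conjP g (A, B)).2 := by
  obtain ⟨hx, hy, hz⟩ := hp
  simp only at hx hy hz
  have hB := det_eq B
  have hll : 0 < l - l⁻¹ := by
    have := inv_lt_one_of_one_lt₀ hl
    linarith
  have hl0 : l * l⁻¹ = 1 := mul_inv_cancel₀ (by linarith)
  have hxe : trace2 A = l + l⁻¹ := by rw [trace2_eq, f00, f11]
  have hye : trace2 B = B.1 0 0 + B.1 1 1 := trace2_eq B
  have hze : trace2 (A * B) = l * B.1 0 0 + l⁻¹ * B.1 1 1 := by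
    rw [trace2_eq, mul_entry, mul_entry, f00, f11, f01, f10]; ring
  set k := B.1 0 0 - B.1 1 1 with hk
  have hD : trace2 B ^ 2 - 4 = k ^ 2 + 4 * B.1 0 1 * B.1 1 0 := by
    rw [hye, hk]; linear_combination 4 * hB
  have hD0 : 0 < k ^ 2 + 4 * B.1 0 1 * B.1 1 0 := by
    rw [← hD]
    generalize trace2 B = y at *
    nlinarith
  have hor : 0 < k ∨ 0 < B.1 0 1 * B.1 1 0 := by
    by_contra! hc
    have e1 : (trace2 A ^ 2 - 4) * (trace2 B ^ 2 - 4) = (l - l⁻¹) ^ 2 *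
        (k ^ 2 + 4 * B.1 0 1 * B.1 1 0) := by
      rw [hD, hxe]; linear_combination (4 * (k ^ 2 + 4 * B.1 0 1 * B.1 1 0)) * hl0
    rw [e1] at hz
    have e2 : trace2 A * trace2 B - 2 * trace2 (A * B) = (l - l⁻¹) * (-k) := by
      rw [hxe, hye, hze, hk]; ring
    rw [e2, Real.sqrt_mul (sq_nonneg _), Real.sqrt_sq hll.le] at hz
    have e3 : Real.sqrt (k ^ 2 + 4 * B.1 0 1 * B.1 1 0) ≤ -k := by
      rw [Real.sqrt_le_left (by linarith)]
      linarith [hc.2, neg_sq k]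
    exact absurd hz (not_lt.2 (mul_le_mul_of_nonneg_left e3 hll.le))
  obtain ⟨t, ht, ht2⟩ := exists_pos_quad hD0 hor
  obtain ⟨u, hu, hu2⟩ := exists_pos_quad (r := -B.1 1 0) (k := k) (q := -B.1 0 1)
    (by linarith) (by simpa using hor)
  have htu : 0 < t + u := by linarith
  have hg : t * (1 / (t + u)) - u / (t + u) * (-1) = 1 := by field_simp; ring
  refine ⟨(mkSL t (u / (t + u)) (-1) (1 / (t + u)) hg)⁻¹, ?_, ?_⟩
  · obtain ⟨-, c2, c3, -⟩ := conj_mkSL_entries A hg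
    refine posM_of_offdiag (by simp only [conjP, trace2_conj]; exact hx) ?_ ?_
    · simp only [conjP]
      rw [c2, f00, f01, f10, f11]
      have : 1 / (t + u) * (l * (u / (t + u)) + 0 * (1 / (t + u))) -
          u / (t + u) * (0 * (u / (t + u)) + l⁻¹ * (1 / (t + u))) =
          (l - l⁻¹) * u * (1 / (t + u)) ^ 2 := by ring
      rw [this]
      positivity
    · simp only [conjP]
      rw [c3, f00, f01, f10, f11]
      have : t * (0 * t + l⁻¹ * -1) - -1 * (l * t + 0 * -1) = (l - l⁻¹) * t := by ring
      rw [this]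
      positivity
  · obtain ⟨-, c2, c3, -⟩ := conj_mkSL_entries B hg
    refine posM_of_offdiag (by simp only [conjP, trace2_conj]; exact hy) ?_ ?_
    · simp only [conjP]
      rw [c2]
      have : 1 / (t + u) * (B.1 0 0 * (u / (t + u)) + B.1 0 1 * (1 / (t + u))) -
          u / (t + u) * (B.1 1 0 * (u / (t + u)) + B.1 1 1 * (1 / (t + u))) =
          (-B.1 1 0 * u ^ 2 + k * u - -B.1 0 1) * (1 / (t + u)) ^ 2 := by rw [hk]; ring
      rw [this]
      positivity
    · simp only [conjP]
      rw [c3]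
      linarith

/-- A pair in `Pp` is conjugate to a pair of positive matrices. -/
theorem exists_conj_pos {p : SL2 × SL2} (hp : p ∈ Pp) :
    ∃ g : SL2, PosM (conjP g p).1 ∧ PosM (conjP g p).2 := by
  obtain ⟨g, l, hl, e00, e11, e01, e10⟩ := exists_diag p.1 hp.1
  obtain ⟨g', h⟩ := exists_conj_pos_of_diag (A := (conjP g p).1) (B := (conjP g p).2)
    (conj_mem_Pp g hp) hl e00 e11 e01 e10
  exact ⟨g' * g, by rwa [← conjP_mul]⟩

theorem Pp_subset_UH : Pp ⊆ UHpairs := by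
  intro p hp
  obtain ⟨g, h1, h2⟩ := exists_conj_pos hp
  have := unifHypPair_conj g⁻¹ (unifHypPair_of_pos h1 h2)
  rwa [conjP_mul, inv_mul_cancel, conjP_one] at this

/-! ### Connectedness and openness of the model pieces -/

theorem SL2.ext2 {A B : SL2} (h00 : A.1 0 0 = B.1 0 0) (h01 : A.1 0 1 = B.1 0 1)
    (h10 : A.1 1 0 = B.1 1 0) (h11 : A.1 1 1 = B.1 1 1) : A = B := by
  apply Subtype.ext
  ext i j
  fin_cases i <;> fin_cases j <;> assumption

theorem continuous_mkSL {X : Type*} [TopologicalSpace X] {a b c d : X → ℝ}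
    (h : ∀ x, a x * d x - b x * c x = 1) (ha : Continuous a) (hb : Continuous b)
    (hc : Continuous c) (hd : Continuous d) :
    Continuous fun x => mkSL (a x) (b x) (c x) (d x) (h x) := by
  refine continuous_SL2_mk fun i j => ?_
  fin_cases i <;> fin_cases j <;> simpa [mkSL]

/-- `SL(2,ℝ)` is connected, since every element is a product of four elementary matrices. -/
theorem preconnectedSpace_SL2 : PreconnectedSpace SL2 := by
  set U : ℝ → SL2 := fun a => mkSL 1 a 0 1 (by ring) with hU
  set L : ℝ → SL2 := fun a => mkSL 1 0 a 1 (by ring) with hL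
  have cU : Continuous U := continuous_mkSL _ continuous_const continuous_id continuous_const
    continuous_const
  have cL : Continuous L := continuous_mkSL _ continuous_const continuous_const continuous_id
    continuous_const
  have cf : Continuous fun v : ℝ × ℝ × ℝ × ℝ => U v.1 * L v.2.1 * U v.2.2.1 * L v.2.2.2 :=
    continuous_SL2_mul (continuous_SL2_mul (continuous_SL2_mul (cU.comp continuous_fst)
      (cL.comp (continuous_fst.comp continuous_snd)))
      (cU.comp (continuous_fst.comp (continuous_snd.comp continuous_snd))))
      (cL.comp (continuous_snd.comp (continuous_snd.comp continuous_snd)))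
  have gen : ∀ A : SL2, A.1 1 0 ≠ 0 → ∃ a b c, A = U a * L b * U c := by
    intro A h
    have e := det_eq A
    refine ⟨(A.1 0 0 - 1) / A.1 1 0, A.1 1 0, (A.1 1 1 - 1) / A.1 1 0, ?_⟩
    apply SL2.ext2 <;> simp only [mul_entry] <;> simp [hU, hL, mkSL] <;> field_simp <;> ring_nf
    linear_combination -e
  have : Set.range (fun v : ℝ × ℝ × ℝ × ℝ => U v.1 * L v.2.1 * U v.2.2.1 * L v.2.2.2) =
      Set.univ := by
    rw [Set.eq_univ_iff_forall]
    intro A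
    by_cases h : A.1 1 0 = 0
    · obtain ⟨a, b, c, e⟩ := gen (A * L 1) (by
        have e := det_eq A
        simp only [mul_entry]
        simp [hL, mkSL, h]
        intro h2
        rw [h, h2] at e
        norm_num at e)
      refine ⟨(a, b, c, -1), ?_⟩
      simp only
      rw [← e]
      apply SL2.ext2 <;> simp only [mul_entry] <;> simp [hL, mkSL]
    · obtain ⟨a, b, c, e⟩ := gen A h
      refine ⟨(a, b, c, 0), ?_⟩
      simp only
      rw [← e]
      apply SL2.ext2 <;> simp only [mul_entry] <;> simp [hL, mkSL]
  exact ⟨this ▸ isPreconnected_range cf⟩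

theorem continuous_conjP {X : Type*} [TopologicalSpace X] {g : X → SL2} {p : X → SL2 × SL2}
    (hg : Continuous g) (hp : Continuous p) : Continuous fun x => conjP (g x) (p x) :=
  (continuous_SL2_mul (continuous_SL2_mul hg (continuous_fst.comp hp))
    (continuous_SL2_inv hg)).prodMk
  (continuous_SL2_mul (continuous_SL2_mul hg (continuous_snd.comp hp)) (continuous_SL2_inv hg))

/-- The positive matrix with first three entries `exp a, exp b, exp c`. -/
noncomputable def posMat (v : ℝ × ℝ × ℝ) : SL2 :=
  mkSL (Real.exp v.1) (Real.exp v.2.1) (Real.exp v.2.2)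
    ((1 + Real.exp v.2.1 * Real.exp v.2.2) * Real.exp (-v.1)) (by
      rw [Real.exp_neg]; have := Real.exp_pos v.1; field_simp; ring)

theorem posM_posMat (v : ℝ × ℝ × ℝ) : PosM (posMat v) := by
  intro i j
  fin_cases i <;> fin_cases j <;> simp [posMat, mkSL] <;> positivity

theorem exists_posMat {A : SL2} (h : PosM A) : ∃ v, posMat v = A := by
  refine ⟨(Real.log (A.1 0 0), Real.log (A.1 0 1), Real.log (A.1 1 0)), ?_⟩
  have e := det_eq A
  have h00 := h 0 0
  apply SL2.ext2
  · simp [posMat, mkSL, Real.exp_log (h 0 0)]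
  · simp [posMat, mkSL, Real.exp_log (h 0 1)]
  · simp [posMat, mkSL, Real.exp_log (h 1 0)]
  · simp [posMat, mkSL, Real.exp_log (h 0 1), Real.exp_log (h 1 0), Real.exp_neg,
      Real.exp_log (h 0 0)]
    field_simp
    linarith

theorem isPreconnected_Pp : IsPreconnected Pp := by
  have := preconnectedSpace_SL2
  have cpos : Continuous posMat := by
    unfold posMat
    apply continuous_mkSL <;> fun_prop
  have cf : Continuous fun v : SL2 × (ℝ × ℝ × ℝ) × (ℝ × ℝ × ℝ) =>
      conjP v.1 (posMat v.2.1, posMat v.2.2) :=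
    continuous_conjP continuous_fst
      ((cpos.comp (continuous_fst.comp continuous_snd)).prodMk
        (cpos.comp (continuous_snd.comp continuous_snd)))
  have e : Set.range (fun v : SL2 × (ℝ × ℝ × ℝ) × (ℝ × ℝ × ℝ) =>
      conjP v.1 (posMat v.2.1, posMat v.2.2)) = Pp := by
    ext p
    constructor
    · rintro ⟨v, rfl⟩
      exact conj_mem_Pp _ (mem_Pp_of_pos (posM_posMat _) (posM_posMat _))
    · intro hp
      obtain ⟨g, h1, h2⟩ := exists_conj_pos hp
      obtain ⟨v, hv⟩ := exists_posMat h1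
      obtain ⟨w, hw⟩ := exists_posMat h2
      refine ⟨(g⁻¹, v, w), ?_⟩
      simp only
      rw [hv, hw, Prod.mk.eta, conjP_mul, inv_mul_cancel, conjP_one]
  exact e ▸ isPreconnected_range cf

theorem continuous_tr1 : Continuous fun p : SL2 × SL2 => trace2 p.1 :=
  continuous_trace2.comp continuous_fst

theorem continuous_tr2 : Continuous fun p : SL2 × SL2 => trace2 p.2 :=
  continuous_trace2.comp continuous_snd

theorem continuous_tr12 : Continuous fun p : SL2 × SL2 => trace2 (p.1 * p.2) :=
  continuous_trace2.comp (continuous_SL2_mul continuous_fst continuous_snd)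

theorem isOpen_Pp : IsOpen Pp := by
  have c1 := continuous_tr1
  have c2 := continuous_tr2
  have c3 := continuous_tr12
  exact (isOpen_lt continuous_const c1).inter ((isOpen_lt continuous_const c2).inter
    (isOpen_lt ((c1.mul c2).sub (continuous_const.mul c3))
      (((c1.pow 2).sub continuous_const).mul ((c2.pow 2).sub continuous_const)).sqrt))

/-- The lower left entry of `tr B · A + tr A · B`; its sign tells apart two pairs with the same
traces which are conjugate in `GL(2,ℝ)` but not in `SL(2,ℝ)`. -/
def ori (p : SL2 × SL2) : ℝ := trace2 p.2 * p.1.1 1 0 + trace2 p.1 * p.2.1 1 0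

theorem continuous_ori : Continuous ori :=
  (continuous_tr2.mul ((continuous_entry 1 0).comp continuous_fst)).add
    (continuous_tr1.mul ((continuous_entry 1 0).comp continuous_snd))

/-- The orientation is the value of a quadratic form, which is definite if
`tr A · tr B · tr AB < tr² A + tr² B`; so conjugation does not change its sign. -/
theorem ori_conj {p : SL2 × SL2} (h : trace2 p.1 * trace2 p.2 * trace2 (p.1 * p.2) <
    trace2 p.1 ^ 2 + trace2 p.2 ^ 2) (g : SL2) : 0 < ori p * ori (conjP g p) := by
  unfold ori
  simp only [conjP, trace2_conj]
  set x := trace2 p.1 with hx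
  set y := trace2 p.2 with hy
  set X00 := y * p.1.1 0 0 + x * p.2.1 0 0
  set X01 := y * p.1.1 0 1 + x * p.2.1 0 1
  set X10 := y * p.1.1 1 0 + x * p.2.1 1 0
  set X11 := y * p.1.1 1 1 + x * p.2.1 1 1
  have e1 := det_eq p.1
  have e2 := det_eq p.2
  have hdisc : (X00 - X11) ^ 2 + 4 * X10 * X01 < 0 := by
    have : (X00 - X11) ^ 2 + 4 * X10 * X01 = 4 * (x * y * trace2 (p.1 * p.2) - (x ^ 2 + y ^ 2)) := by
      simp only [X00, X01, X10, X11, trace2_eq, mul_entry, hx, hy]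
      linear_combination -(4 * (p.2.1 0 0 + p.2.1 1 1) ^ 2) * e1 -
        (4 * (p.1.1 0 0 + p.1.1 1 1) ^ 2) * e2
    linarith
  have hform : y * (g * p.1 * g⁻¹).1 1 0 + x * (g * p.2 * g⁻¹).1 1 0 =
      X10 * g.1 1 1 ^ 2 + (X00 - X11) * (g.1 1 0 * g.1 1 1) - X01 * g.1 1 0 ^ 2 := by
    simp only [mul_entry, inv_entries, X00, X01, X10, X11]
    simp
    ring
  rw [hform]
  have hg := det_eq g
  generalize g.1 1 0 = c at *
  generalize g.1 1 1 = d at *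
  have e3 : X10 * (X10 * d ^ 2 + (X00 - X11) * (c * d) - X01 * c ^ 2) * 4 =
      (2 * X10 * d + (X00 - X11) * c) ^ 2 + (-((X00 - X11) ^ 2 + 4 * X10 * X01)) * c ^ 2 := by ring
  by_cases hc : c = 0
  · subst hc
    have hd : d ≠ 0 := by rintro rfl; simp at hg
    have hX : X10 ≠ 0 := by
      intro h0
      rw [h0] at hdisc
      nlinarith [sq_nonneg (X00 - X11)]
    have : 0 < X10 ^ 2 * d ^ 2 := by positivity
    nlinarith
  · have h1 : 0 < (-((X00 - X11) ^ 2 + 4 * X10 * X01)) * c ^ 2 :=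
      mul_pos (by linarith) (by positivity)
    nlinarith [sq_nonneg (2 * X10 * d + (X00 - X11) * c)]

theorem ori_ne_zero {p : SL2 × SL2} (h : trace2 p.1 * trace2 p.2 * trace2 (p.1 * p.2) <
    trace2 p.1 ^ 2 + trace2 p.2 ^ 2) : ori p ≠ 0 := by
  intro h0
  have := ori_conj h 1
  rw [h0, zero_mul] at this
  exact lt_irrefl _ this

/-- Pairs with traces larger than `2`, product with trace smaller than `-2`, and prescribed
orientation. -/
def Qp (o : Bool) : Set (SL2 × SL2) :=
  {p | 2 < trace2 p.1 ∧ 2 < trace2 p.2 ∧ trace2 (p.1 * p.2) < -2 ∧ 0 < sg o * ori p}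

theorem isOpen_Qp (o : Bool) : IsOpen (Qp o) := by
  exact (isOpen_lt continuous_const continuous_tr1).inter
    ((isOpen_lt continuous_const continuous_tr2).inter
    ((isOpen_lt continuous_tr12 continuous_const).inter
    (isOpen_lt continuous_const (continuous_const.mul continuous_ori))))

/-- Multiplier of the diagonal matrix in the normal form of a pair in `Qp`. -/
noncomputable def lamQ (s : ℝ) : ℝ := Real.exp (Real.exp s)

/-- The inverse of `lamQ`. -/
noncomputable def lamI (s : ℝ) : ℝ := Real.exp (-Real.exp s)

theorem lamQ_gt (s : ℝ) : 1 < lamQ s := Real.one_lt_exp_iff.2 (Real.exp_pos s)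

theorem lamQ_mul (s : ℝ) : lamQ s * lamI s = 1 := by
  rw [lamQ, lamI, ← Real.exp_add, add_neg_cancel, Real.exp_zero]

theorem lamQ_sub (s : ℝ) : 0 < lamQ s - lamI s := by
  have : lamI s < 1 := Real.exp_lt_one_iff.2 (by linarith [Real.exp_pos s])
  linarith [lamQ_gt s]

/-- First entry of the second matrix in the normal form of a pair in `Qp`. -/
noncomputable def entQ (s t u : ℝ) : ℝ :=
  (-(2 + Real.exp u) - (2 + Real.exp t) * lamI s) / (lamQ s - lamI s)

/-- Normal form of a pair in `Qp o`: the first matrix is diagonal with multiplier `lamQ s`, the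
second one has trace `2 + exp t`, the product has trace `-2 - exp u`, and the lower left entry of
the second one is `± exp v`. -/
noncomputable def formQ (o : Bool) (s t u v : ℝ) : SL2 × SL2 :=
  (mkSL (lamQ s) 0 0 (lamI s) (by
    rw [lamQ_mul]; ring),
   mkSL (entQ s t u)
    ((entQ s t u * (2 + Real.exp t - entQ s t u) - 1) * (sg o * Real.exp (-v)))
    (sg o * Real.exp v) (2 + Real.exp t - entQ s t u) (by
      have h1 : Real.exp (-v) * Real.exp v = 1 := by rw [← Real.exp_add]; simp
      have h2 := sg_mul_self o
      linear_combination -(entQ s t u * (2 + Real.exp t - entQ s t u) - 1) *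
        (h2 * (Real.exp (-v) * Real.exp v) + h1)))

theorem isPreconnected_Qp (o : Bool) : IsPreconnected (Qp o) := by
  have := preconnectedSpace_SL2
  have cl : Continuous lamQ := by unfold lamQ; fun_prop
  have cli : Continuous lamI := by unfold lamI; fun_prop
  have ce : Continuous fun v : ℝ × ℝ × ℝ × ℝ => entQ v.1 v.2.1 v.2.2.1 := by
    unfold entQ
    refine Continuous.div ?_ ?_ fun v => (lamQ_sub v.1).ne' <;> fun_prop
  have ce' : Continuous fun v : ℝ × ℝ × ℝ × ℝ =>
      2 + Real.exp v.2.1 - entQ v.1 v.2.1 v.2.2.1 := by fun_prop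
  have cF : Continuous fun v : ℝ × ℝ × ℝ × ℝ => formQ o v.1 v.2.1 v.2.2.1 v.2.2.2 := by
    unfold formQ
    refine Continuous.prodMk ?_ ?_ <;> apply continuous_mkSL <;> fun_prop
  have cf : Continuous fun v : SL2 × ℝ × ℝ × ℝ × ℝ =>
      conjP v.1 (formQ o v.2.1 v.2.2.1 v.2.2.2.1 v.2.2.2.2) :=
    continuous_conjP continuous_fst (cF.comp continuous_snd)
  have e : Set.range (fun v : SL2 × ℝ × ℝ × ℝ × ℝ =>
      conjP v.1 (formQ o v.2.1 v.2.2.1 v.2.2.2.1 v.2.2.2.2)) = Qp o := by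
    ext p
    constructor
    · rintro ⟨⟨g, s, t, u, v⟩, rfl⟩
      simp only
      set q := formQ o s t u v with hq
      have hl := lamQ_gt s
      have hls := lamQ_sub s
      have hl1 : lamQ s * lamI s = 1 := lamQ_mul s
      have x1 : trace2 q.1 = lamQ s + lamI s := by
        rw [trace2_eq]; simp [hq, formQ, mkSL]
      have y1 : trace2 q.2 = 2 + Real.exp t := by
        rw [trace2_eq]; simp [hq, formQ, mkSL]
      have z1 : trace2 (q.1 * q.2) = -(2 + Real.exp u) := by
        have : entQ s t u * (lamQ s - lamI s) =
          (-(2 + Real.exp u) - (2 + Real.exp t) * lamI s) := div_mul_cancel₀ _ hls.ne'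
        rw [trace2_eq, mul_entry, mul_entry]; simp [hq, formQ, mkSL]
        linear_combination this
      have o1 : ori q = (lamQ s + lamI s) * (sg o * Real.exp v) := by
        unfold ori
        rw [x1]
        simp [hq, formQ, mkSL]
      have hx : 2 < trace2 q.1 := by
        rw [x1]; nlinarith
      have hy : 2 < trace2 q.2 := by rw [y1]; linarith [Real.exp_pos t]
      have hz : trace2 (q.1 * q.2) < -2 := by rw [z1]; linarith [Real.exp_pos u]
      have ho := ori_conj (p := q) (by
        have : 0 < trace2 q.1 * trace2 q.2 := by positivity
        nlinarith) g
      refine ⟨by simpa only [conjP, trace2_conj], by simpa only [conjP, trace2_conj],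
        by simpa only [conjP, trace2_conj_mul], ?_⟩
      rw [o1] at ho
      have : 0 < (lamQ s + lamI s) * Real.exp v := by
        rw [← x1]; have := Real.exp_pos v; positivity
      refine pos_of_mul_pos_left (b := (lamQ s + lamI s) * Real.exp v) ?_ this.le
      linarith
    · rintro ⟨hx, hy, hz, ho⟩
      obtain ⟨g, l, hl, f00, f11, f01, f10⟩ := exists_diag p.1 hx
      have hg := ori_conj (p := p) (by
        have : 0 < trace2 p.1 * trace2 p.2 := by positivity
        nlinarith) g
      have hll : l - l⁻¹ ≠ 0 := by
        have := inv_lt_one_of_one_lt₀ hl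
        intro h; linarith
      have hlog := Real.log_pos hl
      have hle : lamQ (Real.log (Real.log l)) = l := by
        rw [lamQ, Real.exp_log hlog, Real.exp_log (by linarith)]
      have hli : lamI (Real.log (Real.log l)) = l⁻¹ := by
        rw [lamI, Real.exp_log hlog, Real.exp_neg, Real.exp_log (by linarith)]
      have hx' := trace2_conj g p.1
      have hy' := trace2_conj g p.2
      have hz' := trace2_conj_mul g p.1 p.2
      rw [← hx'] at hx
      rw [← hy'] at hy
      rw [← hz'] at hz
      have ho' : 0 < sg o * ori (conjP g p) := by
        have h1 := mul_pos hg ho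
        have h2 : 0 < ori p ^ 2 := by
          have : ori p ≠ 0 := by intro h0; rw [h0] at ho; simp at ho
          positivity
        refine pos_of_mul_pos_left (b := ori p ^ 2) ?_ h2.le
        linarith
      have hor : ori (conjP g p) = trace2 (g * p.1 * g⁻¹) * (g * p.2 * g⁻¹).1 1 0 := by
        simp only [ori, conjP]
        rw [f10]; ring
      rw [hor] at ho'
      refine ⟨(g⁻¹, Real.log (Real.log l), Real.log (trace2 (g * p.2 * g⁻¹) - 2),
        Real.log (-trace2 (g * p.1 * g⁻¹ * (g * p.2 * g⁻¹)) - 2),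
        Real.log (sg o * (g * p.2 * g⁻¹).1 1 0)), ?_⟩
      simp only
      have hfin : ∀ q : SL2 × SL2, q = conjP g p → conjP g⁻¹ q = p := by
        rintro q rfl
        rw [conjP_mul, inv_mul_cancel, conjP_one]
      apply hfin
      simp only [conjP]
      clear hg hor hfin hx' hy' hz'
      generalize g * p.1 * g⁻¹ = A at *
      generalize g * p.2 * g⁻¹ = B at *
      have hr : 0 < sg o * B.1 1 0 := by
        refine pos_of_mul_pos_left (b := trace2 A) ?_ (by linarith)
        linarith
      have e1 : Real.exp (Real.log (trace2 B - 2)) = trace2 B - 2 := Real.exp_log (by linarith)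
      have e2 : Real.exp (Real.log (-trace2 (A * B) - 2)) = -trace2 (A * B) - 2 :=
        Real.exp_log (by linarith)
      have e3 := Real.exp_log hr
      have hent : entQ (Real.log (Real.log l)) (Real.log (trace2 B - 2))
          (Real.log (-trace2 (A * B) - 2)) = B.1 0 0 := by
        rw [entQ, hle, hli, e1, e2, div_eq_iff hll, trace2_eq, trace2_eq, mul_entry, mul_entry,
          f00, f01, f10, f11]
        ring
      have hB := det_eq B
      have hsg := sg_mul_self o
      rw [formQ]
      refine Prod.ext (SL2.ext2 ?_ ?_ ?_ ?_) (SL2.ext2 ?_ ?_ ?_ ?_) <;>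
        simp only [mkSL, of_apply, cons_val', cons_val_zero, cons_val_fin_one, cons_val_one]
      · rw [f00, hle]
      · rw [f01]
      · rw [f10]
      · rw [f11, hli]
      · exact hent
      · rw [hent, Real.exp_neg, e3, e1, trace2_eq]
        have hB0 : B.1 1 0 ≠ 0 := by rintro h0; rw [h0] at hr; simp at hr
        have hs0 : sg o ≠ 0 := by rintro h0; rw [h0] at hr; simp at hr
        field_simp
        linarith
      · rw [e3, ← mul_assoc, hsg, one_mul]
      · rw [hent, e1, trace2_eq]; ring
  exact e ▸ isPreconnected_range cf

/-! ### Descent on the traces of a twisted pair -/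

/-- If the child `(x, z, xz - y)` of a trace triple satisfies the inequality `2xyz < x²y²` that
defines twisted triples, then `xyz > 0` and `|xz| < 2|y|`. -/
theorem twist_child {x y z : ℝ} (hx : 2 ≤ |x|) (hz : 2 ≤ |z|)
    (h : 2 * (x * z * (x * z - y)) < x ^ 2 * z ^ 2) :
    0 < x * y * z ∧ |x| * |z| < 2 * |y| := by
  have hxz : 0 < |x| * |z| := by positivity
  have e : x ^ 2 * z ^ 2 = (|x| * |z|) ^ 2 := by rw [mul_pow, sq_abs, sq_abs]
  have h1 : (|x| * |z|) ^ 2 < 2 * (x * y * z) := by rw [← e]; linarith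
  have h2 : x * y * z ≤ (|x| * |z|) * |y| := by
    refine (le_abs_self _).trans (le_of_eq ?_)
    rw [abs_mul, abs_mul]; ring
  refine ⟨by nlinarith [sq_nonneg (|x| * |z|)], ?_⟩
  by_contra! hc
  nlinarith

theorem abs_triple {x y z : ℝ} (h : 0 < x * y * z) : x * y * z = |x| * |y| * |z| := by
  rw [← abs_of_pos h, abs_mul, abs_mul]

/-- Quantitative decrease of the dominant trace, from
`(2|y| - |xz|)² = (x² - 4)(z² - 4) + 4(κ - 2)`. -/
theorem twist_decrease {x y z d : ℝ} (hd : 0 ≤ d) (hx : 2 ≤ |x|) (h0 : 0 < x * y * z)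
    (h1 : |x| * |z| < 2 * |y|)
    (h2 : (2 * d) ^ 2 ≤ (x ^ 2 - 4) * (z ^ 2 - 4) +
      4 * (x ^ 2 + y ^ 2 + z ^ 2 - x * y * z - 4)) : |z| + d ≤ |y| := by
  have e : (x ^ 2 - 4) * (z ^ 2 - 4) + 4 * (x ^ 2 + y ^ 2 + z ^ 2 - x * y * z - 4) =
      (2 * |y| - |x| * |z|) ^ 2 := by
    rw [abs_triple h0, ← sq_abs x, ← sq_abs y, ← sq_abs z]; ring
  rw [e] at h2
  have h3 : 2 * d ≤ 2 * |y| - |x| * |z| := (pow_le_pow_iff_left₀ (by linarith) (by linarith) two_ne_zero).1 h2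
  nlinarith [abs_nonneg z]

/-- A twisted trace triple neither child of which is twisted has `κ < 2`. Assuming `κ ≥ 2` and
`a ≤ b`, the identity `(ab - 2c)² = (a² - 4)(b² - 4) + 4 (κ - 2)` and the inequality
`a (ab - 2c) ≤ b (a² - 4)` force `a = b`, and then `c > 2` is contradicted. -/
theorem kap_lt_of_no_child {a b c : ℝ} (ha : 2 < a) (hb : 2 < b) (hc : 2 < c)
    (h1 : 2 * b ≤ a * c) (h2 : 2 * a ≤ b * c) (h3 : 2 * c < a * b) :
    a ^ 2 + b ^ 2 + c ^ 2 - a * b * c < 4 := by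
  wlog hab : a ≤ b generalizing a b
  · have := this hb ha h2 h1 (by linarith) (by linarith)
    linarith
  by_contra! hcon
  have k1 : (a ^ 2 - 4) * (b ^ 2 - 4) ≤ (a * b - 2 * c) ^ 2 := by nlinarith
  have k2 : a * (a * b - 2 * c) ≤ b * (a ^ 2 - 4) := by nlinarith
  have k3 : 0 < a * (a * b - 2 * c) := mul_pos (by linarith) (by linarith)
  have ha4 : 0 < a ^ 2 - 4 := by nlinarith
  have k4 : (a * (a * b - 2 * c)) ^ 2 ≤ (b * (a ^ 2 - 4)) ^ 2 := pow_le_pow_left₀ k3.le k2 2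
  have k5 : a ^ 2 * ((a ^ 2 - 4) * (b ^ 2 - 4)) ≤ a ^ 2 * (a * b - 2 * c) ^ 2 :=
    mul_le_mul_of_nonneg_left k1 (sq_nonneg a)
  have k6 : (a ^ 2 - 4) * (b ^ 2 - a ^ 2) ≤ 0 := by nlinarith
  have k7 : b ^ 2 - a ^ 2 ≤ 0 := by
    by_contra! h; nlinarith
  have k8 : a = b := le_antisymm hab (by nlinarith)
  subst k8
  have k9 : a * (a * a - 2 * c) < a * (a ^ 2 - 4) := by nlinarith
  have k10 : (a * (a * a - 2 * c)) ^ 2 < (a * (a ^ 2 - 4)) ^ 2 :=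
    pow_lt_pow_left₀ k9 k3.le (by norm_num)
  nlinarith

theorem kap_fplus (p : SL2 × SL2) : kap (Fplus p) = kap p := by
  simp only [kap, Fplus, trace2_mul_mul]; ring

theorem kap_fminus (p : SL2 × SL2) : kap (Fminus p) = kap p := by
  simp only [kap, Fminus, trace2_mul_mul', trace2_mul_comm p.2 p.1]; ring

/-- The twisted pairs: trace conditions satisfied by the closures of the twisted pieces. The bound
`κ ≥ 18` is what `x, y ≥ 2` and `z ≤ -2` give, and `κ` is preserved by `F₊` and `F₋`. -/
def Tw : Set (SL2 × SL2) :=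
  {p | 2 ≤ |trace2 p.1| ∧ 2 ≤ |trace2 p.2| ∧
    2 * (trace2 p.1 * trace2 p.2 * trace2 (p.1 * p.2)) < trace2 p.1 ^ 2 * trace2 p.2 ^ 2 ∧
    18 ≤ kap p}

/-- The height, i.e. the sum of the absolute traces; it decreases from a pair to a twisted child. -/
def ht (p : SL2 × SL2) : ℝ := |trace2 p.1| + |trace2 p.2|

/-- A pair with a twisted child is itself twisted, and the child has smaller height. -/
theorem Tw.of_fplus {p : SL2 × SL2} (h : Fplus p ∈ Tw) : p ∈ Tw ∧
    0 < trace2 p.1 * trace2 p.2 * trace2 (p.1 * p.2) ∧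
    |trace2 p.1| * |trace2 (p.1 * p.2)| < 2 * |trace2 p.2| ∧ 2 ≤ |trace2 (p.1 * p.2)| ∧
    ht (Fplus p) + 4 ≤ ht p := by
  obtain ⟨h1, h2, h3, h4⟩ := h
  rw [kap_fplus] at h4
  simp only [Fplus, trace2_mul_mul] at h1 h2 h3
  obtain ⟨k1, k2⟩ := twist_child h1 h2 h3
  have k3 := twist_decrease (d := 4) (by norm_num) h1 k1 k2 (by
    unfold kap at h4
    have e1 : 4 ≤ trace2 p.1 ^ 2 := by rw [← sq_abs]; nlinarith
    have e2 : 4 ≤ trace2 (p.1 * p.2) ^ 2 := by rw [← sq_abs]; nlinarith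
    have := mul_nonneg (sub_nonneg.2 e1) (sub_nonneg.2 e2)
    linarith)
  refine ⟨⟨h1, by linarith, ?_, h4⟩, k1, k2, h2, by simp only [ht, Fplus]; linarith⟩
  rw [abs_triple k1, ← sq_abs (trace2 p.1), ← sq_abs (trace2 p.2), ← mul_pow, mul_comm,
    mul_assoc, sq]
  have : 0 < |trace2 p.1| * |trace2 p.2| := mul_pos (by linarith) (by linarith)
  refine mul_lt_mul_of_pos_left ?_ this
  nlinarith

theorem Tw.of_fminus {p : SL2 × SL2} (h : Fminus p ∈ Tw) : p ∈ Tw ∧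
    0 < trace2 p.1 * trace2 p.2 * trace2 (p.1 * p.2) ∧
    |trace2 p.2| * |trace2 (p.1 * p.2)| < 2 * |trace2 p.1| ∧ 2 ≤ |trace2 (p.1 * p.2)| ∧
    ht (Fminus p) + 4 ≤ ht p := by
  obtain ⟨h1, h2, h3, h4⟩ := h
  rw [kap_fminus] at h4
  simp only [Fminus, trace2_mul_mul', trace2_mul_comm p.2 p.1] at h1 h2 h3
  obtain ⟨k1, k2⟩ := twist_child (x := trace2 p.2) (y := trace2 p.1) h2 h1 (by linarith)
  have k3 := twist_decrease (d := 4) (by norm_num) h2 k1 k2 (by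
    unfold kap at h4
    have e1 : 4 ≤ trace2 p.2 ^ 2 := by rw [← sq_abs]; nlinarith
    have e2 : 4 ≤ trace2 (p.1 * p.2) ^ 2 := by rw [← sq_abs]; nlinarith
    have := mul_nonneg (sub_nonneg.2 e1) (sub_nonneg.2 e2)
    linarith)
  have k1' : 0 < trace2 p.1 * trace2 p.2 * trace2 (p.1 * p.2) := by linarith
  refine ⟨⟨by linarith, h2, ?_, h4⟩, k1', k2, h1, by
    simp only [ht, Fminus, trace2_mul_comm p.2 p.1]; linarith⟩
  rw [abs_triple k1', ← sq_abs (trace2 p.1), ← sq_abs (trace2 p.2), ← mul_pow, mul_comm,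
    mul_assoc, sq]
  have : 0 < |trace2 p.1| * |trace2 p.2| := mul_pos (by linarith) (by linarith)
  refine mul_lt_mul_of_pos_left ?_ this
  nlinarith

/-- At most one child of a pair is twisted. -/
theorem Tw.not_both {p : SL2 × SL2} (h1 : Fplus p ∈ Tw) (h2 : Fminus p ∈ Tw) : False := by
  obtain ⟨⟨hx, hy, -, -⟩, -, a, hz, -⟩ := Tw.of_fplus h1
  obtain ⟨-, -, b, -, -⟩ := Tw.of_fminus h2
  nlinarith

/-! ### The pieces and their closures -/

/-- The closed conditions corresponding to `Qp`. -/
def Qc (o : Bool) : Set (SL2 × SL2) :=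
  {p | 2 ≤ trace2 p.1 ∧ 2 ≤ trace2 p.2 ∧ trace2 (p.1 * p.2) ≤ -2 ∧ 0 ≤ sg o * ori p}

/-- The closed conditions corresponding to `Pp`. -/
def Pc : Set (SL2 × SL2) :=
  {p | 2 ≤ trace2 p.1 ∧ 2 ≤ trace2 p.2 ∧ trace2 p.1 * trace2 p.2 - 2 * trace2 (p.1 * p.2) ≤
    Real.sqrt ((trace2 p.1 ^ 2 - 4) * (trace2 p.2 ^ 2 - 4))}

theorem isClosed_Qc (o : Bool) : IsClosed (Qc o) :=
  (isClosed_le continuous_const continuous_tr1).inter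
    ((isClosed_le continuous_const continuous_tr2).inter
    ((isClosed_le continuous_tr12 continuous_const).inter
    (isClosed_le continuous_const (continuous_const.mul continuous_ori))))

theorem isClosed_Pc : IsClosed Pc := by
  have c1 := continuous_tr1
  have c2 := continuous_tr2
  have c3 := continuous_tr12
  exact (isClosed_le continuous_const c1).inter ((isClosed_le continuous_const c2).inter
    (isClosed_le ((c1.mul c2).sub (continuous_const.mul c3))
      (((c1.pow 2).sub continuous_const).mul ((c2.pow 2).sub continuous_const)).sqrt))

theorem Qp_subset_Qc (o : Bool) : Qp o ⊆ Qc o :=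
  fun _ h => ⟨h.1.le, h.2.1.le, h.2.2.1.le, h.2.2.2.le⟩

theorem Pp_subset_Pc : Pp ⊆ Pc := fun _ h => ⟨h.1.le, h.2.1.le, h.2.2.le⟩

theorem kap_flipP (s t : Bool) (p : SL2 × SL2) : kap (flipP s t p) = kap p := by
  simp only [kap, flipP, trace2_flip1, trace2_flip_mul]
  cases s <;> cases t <;> simp [sg]

theorem mem_Tw_flip {s t : Bool} {p : SL2 × SL2} (h : flipP s t p ∈ Tw) : p ∈ Tw := by
  obtain ⟨h1, h2, h3, h4⟩ := h
  rw [kap_flipP] at h4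
  simp only [flipP, trace2_flip1, trace2_flip_mul] at h1 h2 h3
  refine ⟨?_, ?_, ?_, h4⟩
  · cases s <;> simpa [sg] using h1
  · cases t <;> simpa [sg] using h2
  · cases s <;> cases t <;> simpa [sg] using h3

theorem neg_of_Qc {o : Bool} {p : SL2 × SL2} (h : p ∈ Qc o) :
    trace2 p.1 * trace2 p.2 * trace2 (p.1 * p.2) ≤ -8 := by
  obtain ⟨h1, h2, h3, -⟩ := h
  have : 4 ≤ trace2 p.1 * trace2 p.2 := by nlinarith
  nlinarith

theorem Qc_subset_Tw (o : Bool) : Qc o ⊆ Tw := by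
  intro p h
  have h8 := neg_of_Qc h
  obtain ⟨h1, h2, h3, -⟩ := h
  refine ⟨h1.trans (le_abs_self _), h2.trans (le_abs_self _), ?_, ?_⟩
  · have : 0 ≤ trace2 p.1 ^ 2 * trace2 p.2 ^ 2 := by positivity
    linarith
  · unfold kap
    nlinarith

theorem neg_flip {s t : Bool} {o : Bool} {p : SL2 × SL2} (h : flipP s t p ∈ Qc o) :
    trace2 p.1 * trace2 p.2 * trace2 (p.1 * p.2) ≤ -8 := by
  have := neg_of_Qc h
  simp only [flipP, trace2_flip1, trace2_flip_mul] at this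
  cases s <;> cases t <;> simpa [sg] using this

/-- A pair satisfying the closed conditions of a twisted piece is twisted, and its height bounds
the length of the word. -/
theorem twisted_of_applySeq (w : List Bool) {s t o : Bool} {p : SL2 × SL2}
    (h : flipP s t (applySeq w p) ∈ Qc o) : p ∈ Tw ∧ 4 * (w.length : ℝ) ≤ ht p := by
  induction w generalizing p with
  | nil =>
    refine ⟨mem_Tw_flip (Qc_subset_Tw o h), ?_⟩
    unfold ht
    simp only [List.length_nil, Nat.cast_zero, mul_zero]
    positivity
  | cons e w ih =>
    rw [applySeq_cons] at h
    obtain ⟨i1, i2⟩ := ih h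
    rw [List.length_cons]
    push_cast
    cases e
    · obtain ⟨j1, -, -, -, j2⟩ := Tw.of_fminus i1
      simp only [Bool.false_eq_true, if_false] at i2
      exact ⟨j1, by linarith⟩
    · obtain ⟨j1, -, -, -, j2⟩ := Tw.of_fplus i1
      simp only [if_true] at i2
      exact ⟨j1, by linarith⟩

theorem ori_flipP (s t : Bool) (p : SL2 × SL2) : ori (flipP s t p) = sg s * sg t * ori p := by
  simp only [ori, flipP, trace2_flip1, flip1_entry]; ring

theorem sign_unique {s s' : Bool} {x : ℝ} (h : 2 ≤ sg s * x) (h' : 2 ≤ sg s' * x) : s = s' := by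
  cases s <;> cases s' <;> simp [sg] at h h' ⊢ <;> linarith

theorem Qc_unique {s t o s' t' o' : Bool} {p : SL2 × SL2} (h : flipP s t p ∈ Qc o)
    (h' : flipP s' t' p ∈ Qc o') : s = s' ∧ t = t' ∧ o = o' := by
  have h1 := h.1
  have h2 := h.2.1
  have h1' := h'.1
  have h2' := h'.2.1
  simp only [flipP, trace2_flip1] at h1 h2 h1' h2'
  obtain rfl := sign_unique h1 h1'
  obtain rfl := sign_unique h2 h2'
  refine ⟨rfl, rfl, ?_⟩
  have hne : ori (flipP s t p) ≠ 0 := ori_ne_zero (by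
    have := neg_of_Qc h
    have := h.1
    nlinarith [sq_nonneg (trace2 (flipP s t p).2), sq_nonneg (trace2 (flipP s t p).1)])
  have a := h.2.2.2
  have b := h'.2.2.2
  by_contra hoo
  apply hne
  cases o <;> cases o' <;> simp [sg] at a b hoo <;> linarith

theorem pos_of_child {e : Bool} {w : List Bool} {s t o : Bool} {p : SL2 × SL2}
    (h : flipP s t (applySeq (e :: w) p) ∈ Qc o) :
    0 < trace2 p.1 * trace2 p.2 * trace2 (p.1 * p.2) := by
  rw [applySeq_cons] at h
  have := (twisted_of_applySeq w h).1
  cases e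
  · exact (Tw.of_fminus this).2.1
  · exact (Tw.of_fplus this).2.1

/-- The word, the signs and the orientation are determined by the pair: the word is empty if and only if
`tr A · tr B · tr AB < 0`, and otherwise its first letter selects the only twisted child. -/
theorem word_unique (w w' : List Bool) {s t o s' t' o' : Bool} {p : SL2 × SL2}
    (h : flipP s t (applySeq w p) ∈ Qc o) (h' : flipP s' t' (applySeq w' p) ∈ Qc o') :
    w = w' ∧ s = s' ∧ t = t' ∧ o = o' := by
  induction w generalizing p w' with
  | nil =>
    cases w' with
    | nil => exact ⟨rfl, Qc_unique h h'⟩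
    | cons e w' =>
      have := neg_flip (p := p) h
      have := pos_of_child h'
      linarith
  | cons e w ih =>
    cases w' with
    | nil =>
      have := neg_flip (p := p) h'
      have := pos_of_child h
      linarith
    | cons e' w' =>
      rw [applySeq_cons] at h h'
      have a := (twisted_of_applySeq w h).1
      have b := (twisted_of_applySeq w' h').1
      have hee : e = e' := by
        cases e <;> cases e'
        · rfl
        · exact (Tw.not_both b a).elim
        · exact (Tw.not_both a b).elim
        · rfl
      subst hee
      obtain ⟨rfl, r⟩ := ih w' h h'
      exact ⟨rfl, r⟩

/-- The straight and the twisted conditions are incompatible, even for closures: one says that `tr AB` is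
at least the smaller root of `κ = 2`, the other that it is below it. -/
theorem not_Pc_of_Tw {s t : Bool} {p : SL2 × SL2} (h : p ∈ Tw) (hP : flipP s t p ∈ Pc) :
    False := by
  have h' : flipP s t p ∈ Tw := mem_Tw_flip (s := s) (t := t) (by rwa [flipP_flipP])
  generalize flipP s t p = q at *
  obtain ⟨h1, h2, h3⟩ := hP
  obtain ⟨-, -, k1, k2⟩ := h'
  unfold kap at k2
  set x := trace2 q.1
  set y := trace2 q.2
  set z := trace2 (q.1 * q.2)
  have hxy : 0 < x * y := by positivity
  have hpos : 0 < x * y - 2 * z := by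
    by_contra! hc
    nlinarith
  have h4 : 0 ≤ (x ^ 2 - 4) * (y ^ 2 - 4) := mul_nonneg (by nlinarith) (by nlinarith)
  have h5 := (Real.le_sqrt' hpos).1 h3
  nlinarith

/-! ### The family of pieces -/

/-- Labels of the components: signs for the straight ones; a word in `F₊`, `F₋`, signs and an
orientation for the twisted ones. -/
abbrev PieceIdx := (Bool × Bool) ⊕ (List Bool × Bool × Bool × Bool)

/-- The sets that turn out to be the components of the hyperbolicity locus. The straight ones are the
sign changes of `Pp`, the twisted ones are the preimages of the sign changes of `Qp o` under words
in `F₊` and `F₋`. -/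
def piece : PieceIdx → Set (SL2 × SL2)
  | Sum.inl (s, t) => flipP s t ⁻¹' Pp
  | Sum.inr (w, s, t, o) => applySeq w ⁻¹' (flipP s t ⁻¹' Qp o)

/-- Closed sets containing the pieces. -/
def pieceC : PieceIdx → Set (SL2 × SL2)
  | Sum.inl (s, t) => flipP s t ⁻¹' Pc
  | Sum.inr (w, s, t, o) => applySeq w ⁻¹' (flipP s t ⁻¹' Qc o)

theorem continuous_Fplus : Continuous Fplus :=
  continuous_fst.prodMk (continuous_SL2_mul continuous_fst continuous_snd)

theorem continuous_Fminus : Continuous Fminus :=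
  (continuous_SL2_mul continuous_snd continuous_fst).prodMk continuous_snd

theorem continuous_applySeq (w : List Bool) : Continuous (applySeq w) := by
  induction w with
  | nil => exact continuous_id
  | cons e w ih =>
    cases e
    · exact ih.comp continuous_Fminus
    · exact ih.comp continuous_Fplus

theorem exists_inverse_applySeq (w : List Bool) : ∃ f : SL2 × SL2 → SL2 × SL2, Continuous f ∧
    (∀ p, f (applySeq w p) = p) ∧ ∀ p, applySeq w (f p) = p := by
  induction w with
  | nil => exact ⟨id, continuous_id, fun _ => rfl, fun _ => rfl⟩
  | cons e w ih =>
    obtain ⟨f, hf, h1, h2⟩ := ih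
    cases e
    · refine ⟨fun p => ((f p).2⁻¹ * (f p).1, (f p).2), ?_, fun p => ?_, fun p => ?_⟩
      · exact (continuous_SL2_mul (continuous_SL2_inv (continuous_snd.comp hf))
          (continuous_fst.comp hf)).prodMk (continuous_snd.comp hf)
      · rw [applySeq_cons]
        simp [h1, Fminus]
      · rw [applySeq_cons]
        simp [Fminus, h2]
    · refine ⟨fun p => ((f p).1, (f p).1⁻¹ * (f p).2), ?_, fun p => ?_, fun p => ?_⟩
      · exact (continuous_fst.comp hf).prodMk (continuous_SL2_mul (continuous_SL2_inv
          (continuous_fst.comp hf)) (continuous_snd.comp hf))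
      · rw [applySeq_cons]
        simp [h1, Fplus]
      · rw [applySeq_cons]
        simp [Fplus, h2]

theorem isOpen_piece (i : PieceIdx) : IsOpen (piece i) := by
  rcases i with ⟨s, t⟩ | ⟨w, s, t, o⟩
  · exact isOpen_Pp.preimage (continuous_flipP s t)
  · exact ((isOpen_Qp o).preimage (continuous_flipP s t)).preimage (continuous_applySeq w)

theorem isClosed_pieceC (i : PieceIdx) : IsClosed (pieceC i) := by
  rcases i with ⟨s, t⟩ | ⟨w, s, t, o⟩
  · exact isClosed_Pc.preimage (continuous_flipP s t)
  · exact ((isClosed_Qc o).preimage (continuous_flipP s t)).preimage (continuous_applySeq w)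

theorem piece_subset_pieceC (i : PieceIdx) : piece i ⊆ pieceC i := by
  rcases i with ⟨s, t⟩ | ⟨w, s, t, o⟩
  · exact Set.preimage_mono Pp_subset_Pc
  · exact Set.preimage_mono (Set.preimage_mono (Qp_subset_Qc o))

theorem isPreconnected_preimage_of_inverse {X : Type*} [TopologicalSpace X] {f g : X → X}
    (hg : Continuous g) (h1 : ∀ x, g (f x) = x) (h2 : ∀ x, f (g x) = x) {s : Set X}
    (hs : IsPreconnected s) : IsPreconnected (f ⁻¹' s) := by
  rw [← Set.image_eq_preimage_of_inverse h2 h1]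
  exact hs.image g hg.continuousOn

theorem isPreconnected_piece (i : PieceIdx) : IsPreconnected (piece i) := by
  have hflip : ∀ s t {Y : Set (SL2 × SL2)}, IsPreconnected Y → IsPreconnected (flipP s t ⁻¹' Y) :=
    fun s t Y hY => isPreconnected_preimage_of_inverse (continuous_flipP s t) (flipP_flipP s t)
      (flipP_flipP s t) hY
  rcases i with ⟨s, t⟩ | ⟨w, s, t, o⟩
  · exact hflip s t isPreconnected_Pp
  · obtain ⟨f, hf, h1, h2⟩ := exists_inverse_applySeq w
    exact isPreconnected_preimage_of_inverse hf h1 h2 (hflip s t (isPreconnected_Qp o))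

theorem disjoint_pieceC {i j : PieceIdx} (hij : i ≠ j) : Disjoint (pieceC i) (pieceC j) := by
  rw [Set.disjoint_left]
  intro p hi hj
  apply hij
  rcases i with ⟨s, t⟩ | ⟨w, s, t, o⟩ <;> rcases j with ⟨s', t'⟩ | ⟨w', s', t', o'⟩
  · have h1 := hi.1
    have h2 := hi.2.1
    have h1' := hj.1
    have h2' := hj.2.1
    simp only [flipP, trace2_flip1] at h1 h2 h1' h2'
    rw [sign_unique h1 h1', sign_unique h2 h2']
  · exact (not_Pc_of_Tw (twisted_of_applySeq w' hj).1 hi).elim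
  · exact (not_Pc_of_Tw (twisted_of_applySeq w hi).1 hj).elim
  · obtain ⟨rfl, rfl, rfl, rfl⟩ := word_unique w w' hi hj
    rfl

theorem disjoint_closure_piece (i j : PieceIdx) (hij : i ≠ j) :
    Disjoint (closure (piece i)) (closure (piece j)) :=
  (disjoint_pieceC hij).mono (closure_minimal (piece_subset_pieceC i) (isClosed_pieceC i))
    (closure_minimal (piece_subset_pieceC j) (isClosed_pieceC j))

theorem continuous_ht : Continuous ht := continuous_tr1.abs.add continuous_tr2.abs

/-- Near a pair the height is bounded, hence so is the length of the words of the pieces. -/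
theorem locallyFinite_piece : LocallyFinite piece := by
  intro p
  refine ⟨{q | ht q < ht p + 1}, (isOpen_lt continuous_ht continuous_const).mem_nhds
    (by simp), ?_⟩
  obtain ⟨n, hn⟩ := exists_nat_gt (ht p + 1)
  have hfin : (Sum.inl '' Set.univ ∪ Sum.inr '' ({w : List Bool | w.length ≤ n} ×ˢ
      (Set.univ : Set (Bool × Bool × Bool))) : Set PieceIdx).Finite :=
    (Set.finite_univ.image _).union
      (((List.finite_length_le Bool n).prod Set.finite_univ).image _)
  refine hfin.subset ?_
  rintro i ⟨q, hq, hqp⟩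
  rcases i with ⟨s, t⟩ | ⟨w, s, t, o⟩
  · exact Or.inl ⟨_, trivial, rfl⟩
  · refine Or.inr ⟨_, ⟨?_, trivial⟩, rfl⟩
    have h := (twisted_of_applySeq w (piece_subset_pieceC _ hq)).2
    have h' : ht q < ht p + 1 := hqp
    have h0 : (0:ℝ) ≤ w.length := Nat.cast_nonneg _
    have : (w.length : ℝ) < n := by linarith
    exact_mod_cast this.le

/-! ### The pieces cover the hyperbolicity locus -/

theorem sg_abs (b : Bool) (x : ℝ) : |sg b * x| = |x| := by cases b <;> simp [sg]

theorem piece_subset_UH (i : PieceIdx) : piece i ⊆ UHpairs := by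
  rcases i with ⟨s, t⟩ | ⟨w, s, t, o⟩
  · intro p hp
    rw [← flipP_flipP s t p]
    exact unifHypPair_flip s t (Pp_subset_UH hp)
  · intro p hp
    apply unifHypPair_of_groupHyp
    apply groupHyp_of_applySeq w
    have hp' : flipP s t (applySeq w p) ∈ Qp o := hp
    have hneg := neg_flip (Qp_subset_Qc o hp')
    obtain ⟨h1, h2, h3, -⟩ := hp'
    simp only [flipP, trace2_flip1, trace2_flip_mul] at h1 h2 h3
    refine groupHyp_of_neg ?_ ?_ ?_ (by linarith)
    · rw [← sg_abs s]; exact h1.trans_le (le_abs_self _)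
    · rw [← sg_abs t]; exact h2.trans_le (le_abs_self _)
    · rw [← sg_abs t, ← sg_abs s, ← mul_assoc]
      exact lt_abs.2 (Or.inr (by linarith))

theorem exists_sign {x : ℝ} (h : x ≠ 0) : ∃ b, sg b * x = |x| := by
  rcases lt_or_gt_of_ne h with h | h
  · exact ⟨false, by simp [sg, abs_of_neg h]⟩
  · exact ⟨true, by simp [sg, abs_of_pos h]⟩

theorem mem_piece_of_neg {p : SL2 × SL2} (h1 : 2 < |trace2 p.1|) (h2 : 2 < |trace2 p.2|)
    (h3 : 2 < |trace2 (p.1 * p.2)|)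
    (hneg : trace2 p.1 * trace2 p.2 * trace2 (p.1 * p.2) < 0) :
    ∃ s t o, flipP s t p ∈ Qp o := by
  obtain ⟨s, hs⟩ := exists_sign (x := trace2 p.1) (by intro h; rw [h] at h1; norm_num at h1)
  obtain ⟨t, ht⟩ := exists_sign (x := trace2 p.2) (by intro h; rw [h] at h2; norm_num at h2)
  have a1 : 2 < trace2 (flipP s t p).1 := by simp only [flipP, trace2_flip1]; rwa [hs]
  have a2 : 2 < trace2 (flipP s t p).2 := by simp only [flipP, trace2_flip1]; rwa [ht]
  have a3 : trace2 (flipP s t p).1 * trace2 (flipP s t p).2 *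
      trace2 ((flipP s t p).1 * (flipP s t p).2) < 0 := by
    simp only [flipP, trace2_flip1, trace2_flip_mul]
    have e : sg s * trace2 p.1 * (sg t * trace2 p.2) * (sg s * sg t * trace2 (p.1 * p.2)) =
      (sg s * sg s) * (sg t * sg t) * (trace2 p.1 * trace2 p.2 * trace2 (p.1 * p.2)) := by ring
    rw [e, sg_mul_self, sg_mul_self]
    linarith
  have a4 : 2 < |trace2 ((flipP s t p).1 * (flipP s t p).2)| := by
    simp only [flipP, trace2_flip_mul]
    rwa [mul_assoc, sg_abs, sg_abs]
  generalize hq : flipP s t p = q at *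
  have hpos : 0 < trace2 q.1 * trace2 q.2 := mul_pos (by linarith) (by linarith)
  have hz : trace2 (q.1 * q.2) < 0 := by
    by_contra! h
    nlinarith [mul_nonneg hpos.le h]
  rw [abs_of_neg hz] at a4
  have hori := ori_ne_zero (p := q) (by
    nlinarith [sq_nonneg (trace2 q.1), sq_nonneg (trace2 q.2)])
  obtain ⟨o, ho⟩ := exists_sign hori
  refine ⟨s, t, o, ?_⟩
  rw [hq]
  exact ⟨a1, a2, by linarith, by rw [ho]; exact abs_pos.2 hori⟩

/-- A uniformly hyperbolic pair with the trace inequalities of a twisted pair is carried by a word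
in `F₊`, `F₋` to a pair with `tr A · tr B · tr AB < 0`: as long as this product is positive, one
child is again twisted, and the height drops by a fixed amount depending only on the
hyperbolicity constants. -/
theorem exists_word {C l m d : ℝ} (hC : 0 < C) (hm : 1 < m) (hml : m < l)
    (hd : 2 + d = m + 1 / m) (n : ℕ) : ∀ p : SL2 × SL2, UHc C l p → 2 ≤ kap p →
    2 * (trace2 p.1 * trace2 p.2 * trace2 (p.1 * p.2)) < trace2 p.1 ^ 2 * trace2 p.2 ^ 2 →
    ht p ≤ n * (2 * d) → ∃ w s t o, flipP s t (applySeq w p) ∈ Qp o := by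
  have hd0 : 0 < d := by
    have : 0 < (m - 1) ^ 2 := by nlinarith
    have e : d = (m - 1) ^ 2 / m := by field_simp at hd ⊢; linarith
    rw [e]; positivity
  have gap : ∀ p : SL2 × SL2, UHc C l p → 2 + d < |trace2 p.1| ∧ 2 + d < |trace2 p.2| ∧
      2 + d < |trace2 (p.1 * p.2)| := by
    intro p hp
    rw [hd]
    have h1 := hp.trace_gap hC hm.le hml [true] (by simp)
    have h2 := hp.trace_gap hC hm.le hml [false] (by simp)
    have h3 := hp.trace_gap hC hm.le hml [false, true] (by simp)
    simp only [pairProd, List.reverse_cons, List.reverse_nil, List.nil_append, List.map_cons,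
      List.map_nil, List.prod_cons, List.prod_nil, mul_one, List.cons_append, if_true,
      Bool.false_eq_true, if_false] at h1 h2 h3
    exact ⟨h1, h2, h3⟩
  induction n with
  | zero =>
    intro p hp _ _ h
    have := gap p hp
    unfold ht at h
    simp at h
    linarith
  | succ n ih =>
    intro p hp hk htw hh
    obtain ⟨gx, gy, gz⟩ := gap p hp
    have hxyz : trace2 p.1 * trace2 p.2 * trace2 (p.1 * p.2) ≠ 0 := by
      rw [← abs_pos, abs_mul, abs_mul]
      have : 0 < 2 + d := by linarith
      exact mul_pos (mul_pos (by linarith) (by linarith)) (by linarith)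
    rcases lt_or_gt_of_ne hxyz with hneg | hpos
    · obtain ⟨s, t, o, h⟩ := mem_piece_of_neg (p := p) (by linarith) (by linarith) (by linarith)
        hneg
      exact ⟨[], s, t, o, h⟩
    have hsq : ∀ u : ℝ, 2 + d < |u| → 4 * d ≤ u ^ 2 - 4 := fun u hu => by
      rw [← sq_abs]; nlinarith
    have hdec : ∀ u v : ℝ, 2 + d < |u| → 2 + d < |v| →
        (2 * (2 * d)) ^ 2 ≤ (u ^ 2 - 4) * (v ^ 2 - 4) + 4 * (kap p - 2) := fun u v hu hv => by
      have := mul_le_mul (hsq u hu) (hsq v hv) (by linarith) (by linarith [hsq u hu])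
      nlinarith
    have hx0 : 0 < |trace2 p.1| := by linarith
    have hy0 : 0 < |trace2 p.2| := by linarith
    have hz0 : 0 < |trace2 (p.1 * p.2)| := by linarith
    have habs := abs_triple hpos
    push_cast at hh
    by_cases c1 : |trace2 p.1| * |trace2 (p.1 * p.2)| < 2 * |trace2 p.2|
    · have hd1 := twist_decrease (x := trace2 p.1) (y := trace2 p.2) (z := trace2 (p.1 * p.2))
        (d := 2 * d) (by linarith) (by linarith) hpos c1 (by
          have := hdec _ _ gx gz
          unfold kap at this
          linarith)
      obtain ⟨w, s, t, o, h⟩ := ih (Fplus p) (hp.fplus hC (hm.trans hml)) (by rwa [kap_fplus]) (by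
          simp only [Fplus, trace2_mul_mul]
          have : (|trace2 p.1| * |trace2 (p.1 * p.2)|) * (|trace2 p.1| * |trace2 (p.1 * p.2)|) <
            (|trace2 p.1| * |trace2 (p.1 * p.2)|) * (2 * |trace2 p.2|) :=
            mul_lt_mul_of_pos_left c1 (by positivity)
          have e : (|trace2 p.1| * |trace2 (p.1 * p.2)|) * (|trace2 p.1| * |trace2 (p.1 * p.2)|) =
            trace2 p.1 ^ 2 * trace2 (p.1 * p.2) ^ 2 := by
            rw [← sq_abs (trace2 p.1), ← sq_abs (trace2 (p.1 * p.2))]; ring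
          rw [e] at this
          linarith) (by
          simp only [ht, Fplus] at hh ⊢
          linarith)
      exact ⟨true :: w, s, t, o, h⟩
    by_cases c2 : |trace2 p.2| * |trace2 (p.1 * p.2)| < 2 * |trace2 p.1|
    · have hd1 := twist_decrease (x := trace2 p.2) (y := trace2 p.1) (z := trace2 (p.1 * p.2))
        (d := 2 * d) (by linarith) (by linarith) (by linarith) c2 (by
          have := hdec _ _ gy gz
          unfold kap at this
          linarith)
      obtain ⟨w, s, t, o, h⟩ := ih (Fminus p) (hp.fminus hC (hm.trans hml))
        (by rwa [kap_fminus]) (by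
          simp only [Fminus, trace2_mul_mul', trace2_mul_comm p.2 p.1]
          have : (|trace2 p.2| * |trace2 (p.1 * p.2)|) * (|trace2 p.2| * |trace2 (p.1 * p.2)|) <
            (|trace2 p.2| * |trace2 (p.1 * p.2)|) * (2 * |trace2 p.1|) :=
            mul_lt_mul_of_pos_left c2 (by positivity)
          have e : (|trace2 p.2| * |trace2 (p.1 * p.2)|) * (|trace2 p.2| * |trace2 (p.1 * p.2)|) =
            trace2 p.2 ^ 2 * trace2 (p.1 * p.2) ^ 2 := by
            rw [← sq_abs (trace2 p.2), ← sq_abs (trace2 (p.1 * p.2))]; ring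
          rw [e] at this
          linarith) (by
          simp only [ht, Fminus, trace2_mul_comm p.2 p.1] at hh ⊢
          linarith)
      exact ⟨false :: w, s, t, o, h⟩
    exfalso
    push Not at c1 c2
    have c3 : 2 * |trace2 (p.1 * p.2)| < |trace2 p.1| * |trace2 p.2| := by
      rw [habs, ← sq_abs (trace2 p.1), ← sq_abs (trace2 p.2), ← mul_pow] at htw
      have : 0 < |trace2 p.1| * |trace2 p.2| := mul_pos hx0 hy0
      nlinarith
    have := kap_lt_of_no_child (a := |trace2 p.1|) (b := |trace2 p.2|)
      (c := |trace2 (p.1 * p.2)|) (by linarith) (by linarith) (by linarith) c1 c2 c3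
    rw [← habs, sq_abs, sq_abs, sq_abs] at this
    unfold kap at hk
    linarith

/-- A uniformly hyperbolic pair outside the straight pieces satisfies `κ ≥ 2` and the inequality of
twisted pairs, so that `exists_word` applies. -/
theorem UHpairs_eq : UHpairs = ⋃ i, piece i := by
  apply Set.Subset.antisymm _ (Set.iUnion_subset piece_subset_UH)
  rintro p ⟨C, hC, l, hl, hp⟩
  obtain ⟨m, hm, hml⟩ := exists_between hl
  have hp' : UHc C l p := hp
  have hm2 : 2 < m + 1 / m := by
    have : 0 < (m - 1) ^ 2 := by nlinarith
    have e : m + 1 / m = 2 + (m - 1) ^ 2 / m := by field_simp; ring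
    rw [e]
    have : 0 < (m - 1) ^ 2 / m := by positivity
    linarith
  have gx : 2 < |trace2 p.1| := by
    have := hp'.trace_gap hC hm.le hml [true] (by simp)
    simp [pairProd] at this
    simp at hm2
    linarith
  have gy : 2 < |trace2 p.2| := by
    have := hp'.trace_gap hC hm.le hml [false] (by simp)
    simp [pairProd] at this
    simp at hm2
    linarith
  obtain ⟨s, hs⟩ := exists_sign (x := trace2 p.1) (by intro h; rw [h] at gx; norm_num at gx)
  obtain ⟨t, ht'⟩ := exists_sign (x := trace2 p.2) (by intro h; rw [h] at gy; norm_num at gy)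
  by_cases hP : flipP s t p ∈ Pp
  · exact Set.mem_iUnion.2 ⟨Sum.inl (s, t), hP⟩
  have a1 : 2 < trace2 (flipP s t p).1 := by simp only [flipP, trace2_flip1]; rwa [hs]
  have a2 : 2 < trace2 (flipP s t p).2 := by simp only [flipP, trace2_flip1]; rwa [ht']
  have a3 : Real.sqrt ((trace2 (flipP s t p).1 ^ 2 - 4) * (trace2 (flipP s t p).2 ^ 2 - 4)) ≤
      trace2 (flipP s t p).1 * trace2 (flipP s t p).2 -
        2 * trace2 ((flipP s t p).1 * (flipP s t p).2) := by
    by_contra! h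
    exact hP ⟨a1, a2, h⟩
  have hb : 0 < (trace2 (flipP s t p).1 ^ 2 - 4) * (trace2 (flipP s t p).2 ^ 2 - 4) :=
    mul_pos (by nlinarith) (by nlinarith)
  have a4 := Real.sqrt_pos.2 hb
  have a5 := (Real.sqrt_le_left (by linarith)).1 a3
  have hk : 2 ≤ kap (flipP s t p) := by unfold kap; nlinarith
  rw [kap_flipP] at hk
  have htw : 2 * (trace2 p.1 * trace2 p.2 * trace2 (p.1 * p.2)) <
      trace2 p.1 ^ 2 * trace2 p.2 ^ 2 := by
    have h1 : 2 * (trace2 (flipP s t p).1 * trace2 (flipP s t p).2 *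
        trace2 ((flipP s t p).1 * (flipP s t p).2)) <
        trace2 (flipP s t p).1 ^ 2 * trace2 (flipP s t p).2 ^ 2 := by
      have : 0 < trace2 (flipP s t p).1 * trace2 (flipP s t p).2 := by positivity
      nlinarith [mul_pos this (a4.trans_le a3)]
    simp only [flipP, trace2_flip1, trace2_flip_mul] at h1
    cases s <;> cases t <;> simpa [sg] using h1
  obtain ⟨n, hn⟩ := exists_nat_ge (ht p / (2 * (m + 1 / m - 2)))
  rw [div_le_iff₀ (by linarith)] at hn
  obtain ⟨w, s, t, o, h⟩ := exists_word hC hm hml (d := m + 1 / m - 2) (by ring) n p hp' hk htw hn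
  exact Set.mem_iUnion.2 ⟨Sum.inr (w, s, t, o), h⟩

/-- **Local finiteness and separation of the components of `𝓗`** for the full
2-shift: a compact set meets only finitely many connected components, and
distinct components have disjoint closures, so the boundary of `𝓗` is the
disjoint union of the boundaries of its components. -/
theorem components_locally_finite_two_shift :
    (∀ K : Set (SL2 × SL2), IsCompact K →
      {C : Set (SL2 × SL2) |
        (∃ p ∈ UHpairs, C = connectedComponentIn UHpairs p) ∧
          (C ∩ K).Nonempty}.Finite) ∧
    (∀ p ∈ UHpairs, ∀ q ∈ UHpairs,
      connectedComponentIn UHpairs p ≠ connectedComponentIn UHpairs q →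
      closure (connectedComponentIn UHpairs p) ∩
        closure (connectedComponentIn UHpairs q) = ∅) ∧
    frontier UHpairs = ⋃ p ∈ UHpairs, frontier (connectedComponentIn UHpairs p) := by
  exact family_conclusion piece isOpen_piece isPreconnected_piece disjoint_closure_piece
    locallyFinite_piece UHpairs UHpairs_eq
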